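/- arXiv:2408.00313 — 2 statements merged into one kernel-verified Lean document; each statement's English description precedes it below -/
import Mathlib

section
/- There is no cuspidal S_1^- singularity on any minface: if f is a minface on an open set U ⊆ R^2 with real Weierstrass data (g1, g2, ω1 du, ω2 dv), then for every point p ∈ U the germ of f at p is not A-equivalent to the cuspidal S_1^- singularity f_{CS1-}(u,v) = (u, v^2, v^3(u^2 - v^2)) at the origin. -/
noncomputable section

open Real Filter

abbrev R2 : Type := ℝ × ℝ
abbrev R3 : Type := ℝ × ℝ × ℝ

/-- The partial derivative in the `u`-direction. -/
def pu (f : R2 → R3) (p : R2) : R3 := fderiv ℝ f p (1, 0)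
/-- The partial derivative in the `v`-direction. -/
def pv (f : R2 → R3) (p : R2) : R3 := fderiv ℝ f p (0, 1)

/-- Determinant of three column vectors in ℝ³. -/
def det3 (a b c : R3) : ℝ :=
  a.1 * (b.2.1 * c.2.2 - b.2.2 * c.2.1)
  - b.1 * (a.2.1 * c.2.2 - a.2.2 * c.2.1)
  + c.1 * (a.2.1 * b.2.2 - a.2.2 * b.2.1)

/-- Determinant of two vectors in ℝ². -/
def det2 (a b : R2) : ℝ := a.1 * b.2 - a.2 * b.1

/-- Euclidean inner product on ℝ³. -/
def ip3 (a b : R3) : ℝ := a.1 * b.1 + a.2.1 * b.2.1 + a.2.2 * b.2.2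

/-- `f : ℝ² → ℝ³ = 𝕃³` is the generalized timelike minimal surface with real Weierstrass
data `(g1, g2, w1 du, w2 dv)`: it is smooth, its partial derivatives are
`f_u = (ω1/2)·(-1-g1², 1-g1², 2g1)` and `f_v = (ω2/2)·(1+g2², 1-g2², -2g2)`
(which encodes the Weierstrass-type integral representation), and it is an immersion
on an open dense set. -/
structure IsGTMS (f : R2 → R3) (g1 g2 w1 w2 : ℝ → ℝ) : Prop where
  smooth_f : ContDiff ℝ (⊤ : ℕ∞) f
  smooth_g1 : ContDiff ℝ (⊤ : ℕ∞) g1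
  smooth_g2 : ContDiff ℝ (⊤ : ℕ∞) g2
  smooth_w1 : ContDiff ℝ (⊤ : ℕ∞) w1
  smooth_w2 : ContDiff ℝ (⊤ : ℕ∞) w2
  deriv_u : ∀ p : R2, pu f p =
    ((-1 - g1 p.1 ^ 2) * w1 p.1 / 2, (1 - g1 p.1 ^ 2) * w1 p.1 / 2, g1 p.1 * w1 p.1)
  deriv_v : ∀ p : R2, pv f p =
    ((1 + g2 p.2 ^ 2) * w2 p.2 / 2, (1 - g2 p.2 ^ 2) * w2 p.2 / 2, -(g2 p.2 * w2 p.2))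
  dense_immersion : Dense {p : R2 | Function.Injective (fderiv ℝ f p)}

/-- `Φ` is a germ of diffeomorphism at `p`. -/
def IsLocalDiffeoAt {E F : Type*} [NormedAddCommGroup E] [NormedSpace ℝ E]
    [NormedAddCommGroup F] [NormedSpace ℝ F] (Φ : E → F) (p : E) : Prop :=
  ∃ (U : Set E) (V : Set F) (Φinv : F → E),
    IsOpen U ∧ p ∈ U ∧ IsOpen V ∧ Φ p ∈ V ∧
    ContDiffOn ℝ (⊤ : ℕ∞) Φ U ∧ ContDiffOn ℝ (⊤ : ℕ∞) Φinv V ∧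
    Set.MapsTo Φ U V ∧ Set.MapsTo Φinv V U ∧
    (∀ x ∈ U, Φinv (Φ x) = x) ∧ (∀ y ∈ V, Φ (Φinv y) = y)

/-- 𝒜-equivalence of the germ of `f1` at `p1` and the germ of `f2` at `p2`. -/
def AEquiv (f1 : R2 → R3) (p1 : R2) (f2 : R2 → R3) (p2 : R2) : Prop :=
  ∃ (Φ : R2 → R2) (Ψ : R3 → R3),
    IsLocalDiffeoAt Φ p1 ∧ Φ p1 = p2 ∧
    IsLocalDiffeoAt Ψ (f1 p1) ∧ Ψ (f1 p1) = f2 p2 ∧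
    ∀ᶠ x in nhds p1, Ψ (f1 x) = f2 (Φ x)

/-- The canonical unit normal of a generalized timelike minimal surface. -/
def gtmsNormal (g1 g2 : ℝ → ℝ) (p : R2) : R3 :=
  (Real.sqrt ((1 - g1 p.1 * g2 p.2) ^ 2 + 2 * (g1 p.1 + g2 p.2) ^ 2))⁻¹ •
    (g1 p.1 + g2 p.2, -g1 p.1 + g2 p.2, 1 + g1 p.1 * g2 p.2)

/-- The signed area density function `λ = det(f_u, f_v, n)`. -/
def areaDensity (f : R2 → R3) (g1 g2 : ℝ → ℝ) (p : R2) : ℝ :=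
  det3 (pu f p) (pv f p) (gtmsNormal g1 g2 p)

/-- `f` is a front at `p`: the Legendrian lift `(f, n)` is an immersion at `p`,
where `n` is the canonical unit normal. -/
def IsFrontAt (f : R2 → R3) (g1 g2 : ℝ → ℝ) (p : R2) : Prop :=
  Function.Injective (fderiv ℝ (fun q => (f q, gtmsNormal g1 g2 q)) p)

/-- The differential of `f` at `p` has rank one. -/
def RankOne (f : R2 → R3) (p : R2) : Prop :=
  LinearMap.rank (fderiv ℝ f p).toLinearMap = 1

/-- Directional derivative of `F` along the vector field `X`. -/
def vD (X : R2 → R2) (F : R2 → R3) : R2 → R3 := fun q => fderiv ℝ F q (X q)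

/-- `φ_i = g_i' / (g_i² ω_i)`. -/
def phiW (g w : ℝ → ℝ) : ℝ → ℝ := fun t => deriv g t / (g t ^ 2 * w t)
/-- `Φ_i = (g_i/g_i') φ_i'`. -/
def PhiW (g w : ℝ → ℝ) : ℝ → ℝ := fun t => g t / deriv g t * deriv (phiW g w) t

/-- standard cuspidal butterfly -/
def fCBF : R2 → R3 := fun q =>
  (q.1, 5 * q.2 ^ 4 + 2 * q.1 * q.2, 4 * q.2 ^ 5 + q.1 * q.2 ^ 2 - q.1 ^ 2)
/-- standard cuspidal S₁⁺ singularity -/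
def fCS1p : R2 → R3 := fun q => (q.1, q.2 ^ 2, q.2 ^ 3 * (q.1 ^ 2 + q.2 ^ 2))
/-- standard cuspidal S₁⁻ singularity -/
def fCS1m : R2 → R3 := fun q => (q.1, q.2 ^ 2, q.2 ^ 3 * (q.1 ^ 2 - q.2 ^ 2))
/-- standard cuspidal edge -/
def fCE : R2 → R3 := fun q => (q.1, q.2 ^ 2, q.2 ^ 3)
/-- standard (2,5)-cuspidal edge -/
def fCE25 : R2 → R3 := fun q => (q.1, q.2 ^ 2, q.2 ^ 5)
/-- standard cuspidal beaks -/
def fCBK : R2 → R3 := fun q =>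
  (q.2, q.1 ^ 3 - q.1 * q.2 ^ 2, 3 * q.1 ^ 4 - 2 * q.1 ^ 2 * q.2 ^ 2)
/-- standard cuspidal lips -/
def fCLP : R2 → R3 := fun q =>
  (q.2, q.1 ^ 3 + q.1 * q.2 ^ 2, 3 * q.1 ^ 4 + 2 * q.1 ^ 2 * q.2 ^ 2)
/-- standard D₄⁺ singularity -/
def fD4p : R2 → R3 := fun q =>
  (q.1 * q.2, q.1 ^ 2 + 3 * q.2 ^ 2, q.1 ^ 2 * q.2 + q.2 ^ 3)
/-- standard D₄⁻ singularity -/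
def fD4m : R2 → R3 := fun q =>
  (q.1 * q.2, q.1 ^ 2 - 3 * q.2 ^ 2, q.1 ^ 2 * q.2 - q.2 ^ 3)


/-- Two measures `a dx`, `b dx` on intervals with `a ≤ b` cannot share their first three moments
in the strictly monotone function `ρ`. -/
lemma no_common_moments {I : Set ℝ} (hI : I.OrdConnected) {a b ρ : ℝ → ℝ} {A B : Fin 3 → ℝ → ℝ}
    (hρ : StrictMonoOn ρ I)
    (hA : ∀ k, ∀ x ∈ I, HasDerivAt (A k) (a x * ρ x ^ (k : ℕ)) x)
    (hB : ∀ k, ∀ x ∈ I, HasDerivAt (B k) (b x * ρ x ^ (k : ℕ)) x)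
    (ha : ∀ x ∈ I, 0 < a x) (hab : ∀ x ∈ I, a x ≤ b x) (hab' : ∀ x ∈ I, x ≠ 0 → a x < b x)
    {s s' t t' : ℝ} (hs : s ∈ I) (hs' : s' ∈ I) (ht : t ∈ I) (ht' : t' ∈ I)
    (hss : s' < s) (htt : t < t') (heq : ∀ k, A k s - A k s' = B k t' - B k t) : False := by
  set α : ℝ → ℝ := fun x => A 2 x - (ρ t + ρ t') * A 1 x + ρ t * ρ t' * A 0 x with hα
  set β : ℝ → ℝ := fun x => B 2 x - (ρ t + ρ t') * B 1 x + ρ t * ρ t' * B 0 x with hβ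
  have dα : ∀ x ∈ I, HasDerivAt α (a x * ((ρ x - ρ t) * (ρ x - ρ t'))) x := fun x hx => by
    have := ((hA 2 x hx).sub ((hA 1 x hx).const_mul (ρ t + ρ t'))).add
      ((hA 0 x hx).const_mul (ρ t * ρ t'))
    refine this.congr_deriv ?_
    simp; ring
  have dβ : ∀ x ∈ I, HasDerivAt β (b x * ((ρ x - ρ t) * (ρ x - ρ t'))) x := fun x hx => by
    have := ((hB 2 x hx).sub ((hB 1 x hx).const_mul (ρ t + ρ t'))).add
      ((hB 0 x hx).const_mul (ρ t * ρ t'))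
    refine this.congr_deriv ?_
    simp; ring
  have hαβ : α s - α s' = β t' - β t := by
    have h0 := heq 0
    have h1 := heq 1
    have h2 := heq 2
    simp only [hα, hβ]
    linear_combination h2 - (ρ t + ρ t') * h1 + ρ t * ρ t' * h0
  have mono : ∀ c ∈ I, ∀ d ∈ I, c ≤ d → (d ≤ t ∨ t' ≤ c) → α c ≤ α d := by
    intro c hc d hd hcd h
    have hsub : Set.Icc c d ⊆ I := hI.out hc hd
    refine monotoneOn_of_deriv_nonneg (convex_Icc c d)
      (fun x hx => (dα x (hsub hx)).continuousAt.continuousWithinAt)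
      (fun x hx => (dα x (hsub (interior_subset hx))).differentiableAt.differentiableWithinAt)
      (fun x hx => ?_) (Set.left_mem_Icc.2 hcd) (Set.right_mem_Icc.2 hcd) hcd
    have hx' := interior_subset hx
    have hxI := hsub hx'
    rw [(dα x hxI).deriv]
    refine mul_nonneg (ha x hxI).le ?_
    rcases h with h | h
    · have h1 := hρ.monotoneOn hxI ht (hx'.2.trans h)
      have h2 := hρ.monotoneOn hxI ht' ((hx'.2.trans h).trans htt.le)
      nlinarith
    · have h1 := hρ.monotoneOn ht hxI (htt.le.trans (h.trans hx'.1))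
      have h2 := hρ.monotoneOn ht' hxI (h.trans hx'.1)
      nlinarith
  have hsubt : Set.Icc t t' ⊆ I := hI.out ht ht'
  have hq : ∀ x ∈ Set.Icc t t', (ρ x - ρ t) * (ρ x - ρ t') ≤ 0 := fun x hx => by
    have h1 := hρ.monotoneOn ht (hsubt hx) hx.1
    have h2 := hρ.monotoneOn (hsubt hx) ht' hx.2
    nlinarith
  have anti : AntitoneOn α (Set.Icc t t') := by
    refine antitoneOn_of_deriv_nonpos (convex_Icc t t')
      (fun x hx => (dα x (hsubt hx)).continuousAt.continuousWithinAt)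
      (fun x hx => (dα x (hsubt (interior_subset hx))).differentiableAt.differentiableWithinAt)
      (fun x hx => ?_)
    have hx' := interior_subset hx
    rw [(dα x (hsubt hx')).deriv]
    exact mul_nonpos_of_nonneg_of_nonpos (ha x (hsubt hx')).le (hq x hx')
  have tl := Set.left_mem_Icc.2 htt.le
  have tr := Set.right_mem_Icc.2 htt.le
  have key : α t' - α t ≤ α s - α s' := by
    have htt' := anti tl tr htt.le
    rcases lt_or_ge s t with h1 | h1
    · linarith [mono s' hs' s hs hss.le (Or.inl h1.le)]
    rcases lt_or_ge t' s' with h2 | h2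
    · linarith [mono s' hs' s hs hss.le (Or.inr h2.le)]
    have e1 : α t' ≤ α s := by
      rcases le_total s t' with h | h
      · exact anti ⟨h1, h⟩ tr h
      · exact mono t' ht' s hs h (Or.inr le_rfl)
    have e2 : α s' ≤ α t := by
      rcases le_total s' t with h | h
      · exact mono s' hs' t ht h (Or.inl le_rfl)
      · exact anti tl ⟨h, h2⟩ h
    linarith
  have dδ : ∀ x ∈ I, HasDerivAt (β - α) ((b x - a x) * ((ρ x - ρ t) * (ρ x - ρ t'))) x :=
    fun x hx => ((dβ x hx).sub (dα x hx)).congr_deriv (by ring)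
  have antiδ : AntitoneOn (β - α) (Set.Icc t t') := by
    refine antitoneOn_of_deriv_nonpos (convex_Icc t t')
      (fun x hx => (dδ x (hsubt hx)).continuousAt.continuousWithinAt)
      (fun x hx => (dδ x (hsubt (interior_subset hx))).differentiableAt.differentiableWithinAt)
      (fun x hx => ?_)
    have hx' := interior_subset hx
    rw [(dδ x (hsubt hx')).deriv]
    exact mul_nonpos_of_nonneg_of_nonpos (sub_nonneg.2 (hab x (hsubt hx'))) (hq x hx')
  have hle : (β - α) t ≤ (β - α) t' := by
    simp only [Pi.sub_apply]
    linarith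
  obtain ⟨x, hx, hx0⟩ : ∃ x ∈ Set.Ioo t t', x ≠ 0 :=
    ((Set.Ioo_infinite htt).sdiff (Set.finite_singleton (0 : ℝ))).nonempty
  have hconst : (β - α) =ᶠ[nhds x] fun _ => (β - α) t := by
    filter_upwards [Ioo_mem_nhds hx.1 hx.2] with y hy
    have hy' : y ∈ Set.Icc t t' := Set.Ioo_subset_Icc_self hy
    exact le_antisymm (antiδ tl hy' hy'.1) (hle.trans (antiδ hy' tr hy'.2))
  have hxI := hsubt (Set.Ioo_subset_Icc_self hx)
  have h0 := (dδ x hxI).unique ((hasDerivAt_const x ((β - α) t)).congr_of_eventuallyEq hconst)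
  have h1 := hρ ht hxI hx.1
  have h2 := hρ hxI ht' hx.2
  have := mul_pos (sub_pos.2 (hab' x hxI hx0)) (mul_pos (sub_pos.2 h1) (sub_pos.2 h2))
  nlinarith

/-- Injectivity of the sum of two curves with comparable positive densities. -/
lemma eq_of_sum_eq {I : Set ℝ} (hI : I.OrdConnected) {a b ρ : ℝ → ℝ} {A B : Fin 3 → ℝ → ℝ}
    (hρ : StrictMonoOn ρ I ∨ StrictAntiOn ρ I)
    (hA : ∀ k, ∀ x ∈ I, HasDerivAt (A k) (a x * ρ x ^ (k : ℕ)) x)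
    (hB : ∀ k, ∀ x ∈ I, HasDerivAt (B k) (b x * ρ x ^ (k : ℕ)) x)
    (hpos : (∀ x ∈ I, 0 < a x ∧ 0 < b x) ∨ (∀ x ∈ I, a x < 0 ∧ b x < 0))
    (hab0 : a 0 = b 0)
    (hab : (∀ x ∈ I, x ≠ 0 → a x < b x) ∨ (∀ x ∈ I, x ≠ 0 → b x < a x))
    {s s' t t' : ℝ} (hs : s ∈ I) (hs' : s' ∈ I) (ht : t ∈ I) (ht' : t' ∈ I)
    (heq : ∀ k, A k s + B k t = A k s' + B k t') : s = s' ∧ t = t' := by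
  wlog hm : StrictMonoOn ρ I generalizing ρ A B
  · have hanti := hρ.resolve_left hm
    refine this (ρ := fun x => -ρ x) (A := fun k x => (-1) ^ (k : ℕ) * A k x)
      (B := fun k x => (-1) ^ (k : ℕ) * B k x) (Or.inl fun x hx y hy h => ?_) (fun k x hx => ?_)
      (fun k x hx => ?_) (fun k => ?_) (fun x hx y hy h => ?_)
    · exact neg_lt_neg (hanti hx hy h)
    · refine ((hA k x hx).const_mul _).congr_deriv ?_
      rw [neg_pow (ρ x)]; ring
    · refine ((hB k x hx).const_mul _).congr_deriv ?_
      rw [neg_pow (ρ x)]; ring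
    · linear_combination (-1) ^ (k : ℕ) * heq k
    · exact neg_lt_neg (hanti hx hy h)
  wlog hp : ∀ x ∈ I, 0 < a x ∧ 0 < b x generalizing a b A B
  · have hn := hpos.resolve_left hp
    refine this (a := fun x => -a x) (b := fun x => -b x) (A := fun k x => -A k x)
      (B := fun k x => -B k x) (Or.inl fun x hx => ?_) (by rw [hab0]) ?_ (fun k x hx => ?_)
      (fun k x hx => ?_) (fun k => ?_) (fun x hx => ?_)
    · exact ⟨neg_pos.2 (hn x hx).1, neg_pos.2 (hn x hx).2⟩
    · rcases hab with h | h
      · exact Or.inr fun x hx h0 => neg_lt_neg (h x hx h0)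
      · exact Or.inl fun x hx h0 => neg_lt_neg (h x hx h0)
    · exact ((hA k x hx).neg).congr_deriv (by ring)
    · exact ((hB k x hx).neg).congr_deriv (by ring)
    · linear_combination -heq k
    · exact ⟨neg_pos.2 (hn x hx).1, neg_pos.2 (hn x hx).2⟩
  have mono : ∀ {c : ℝ → ℝ} {C : ℝ → ℝ}, (∀ x ∈ I, HasDerivAt C (c x) x) → (∀ x ∈ I, 0 < c x) →
      StrictMonoOn C I := fun {c C} hC hc =>
    strictMonoOn_of_deriv_pos hI.convex (fun x hx => (hC x hx).continuousAt.continuousWithinAt)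
      fun x hx => by
        rw [(hC x (interior_subset hx)).deriv]
        exact hc x (interior_subset hx)
  have mA : StrictMonoOn (A 0) I :=
    mono (c := a) (fun x hx => (hA 0 x hx).congr_deriv (by simp)) fun x hx => (hp x hx).1
  have mB : StrictMonoOn (B 0) I :=
    mono (c := b) (fun x hx => (hB 0 x hx).congr_deriv (by simp)) fun x hx => (hp x hx).2
  have hno : ∀ {s s' t t' : ℝ}, s ∈ I → s' ∈ I → t ∈ I → t' ∈ I →
      (∀ k, A k s + B k t = A k s' + B k t') → ¬ s' < s := by
    intro s s' t t' hs hs' ht ht' heq hss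
    have htt : t < t' := by
      rw [← mB.lt_iff_lt ht ht']
      have := heq 0
      linarith [mA hs' hs hss]
    rcases hab with h | h
    · refine no_common_moments hI hm hA hB (fun x hx => (hp x hx).1) (fun x hx => ?_) h hs hs' ht
        ht' hss htt fun k => by linear_combination heq k
      by_cases h0 : x = 0
      · rw [h0, hab0]
      · exact (h x hx h0).le
    · refine no_common_moments hI hm hB hA (fun x hx => (hp x hx).2) (fun x hx => ?_) h ht' ht hs'
        hs htt hss fun k => by linear_combination -heq k
      by_cases h0 : x = 0
      · rw [h0, hab0]
      · exact (h x hx h0).le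
  have hss : s = s' := le_antisymm (not_lt.1 (hno hs hs' ht ht' heq))
    (not_lt.1 (hno hs' hs ht' ht fun k => (heq k).symm))
  refine ⟨hss, mB.injOn ht ht' ?_⟩
  have := heq 0
  rw [hss] at this
  linarith

/-- First order expansion at a cuspidal point. -/
lemma cusp_first_order {l₁ l₂ ρ₁ ρ₂ P Q : ℝ → ℝ} {x ρ₀ d₁ d₂ : ℝ}
    (hl₁ : ContinuousAt l₁ 0) (hl₂ : ContinuousAt l₂ 0)
    (hρ₁ : HasDerivAt ρ₁ d₁ 0) (hρ₂ : HasDerivAt ρ₂ d₂ 0) (h₁ : ρ₁ 0 = ρ₀) (h₂ : ρ₂ 0 = ρ₀)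
    (hP : ContinuousAt P 0) (hQ : ContinuousAt Q 0)
    (h : ∀ᶠ y in nhds (0 : ℝ), l₁ y * (ρ₁ y - ρ₀) + l₂ y * (ρ₂ y - ρ₀) =
      2 * y * P y + (3 * x ^ 2 * y ^ 2 - 5 * y ^ 4) * Q y) :
    l₁ 0 * d₁ + l₂ 0 * d₂ = 2 * P 0 := by
  have t₁ := hasDerivAt_iff_tendsto_slope.1 hρ₁
  have t₂ := hasDerivAt_iff_tendsto_slope.1 hρ₂
  have res : ∀ {g : ℝ → ℝ}, ContinuousAt g 0 → Tendsto g (nhdsWithin 0 {0}ᶜ) (nhds (g 0)) :=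
    fun hg => hg.tendsto.mono_left nhdsWithin_le_nhds
  have L := ((res hl₁).mul t₁).add ((res hl₂).mul t₂)
  have hpol : ContinuousAt (fun y : ℝ => 2 * P y + (3 * x ^ 2 * y - 5 * y ^ 3) * Q y) 0 := by
    fun_prop
  have R := res hpol
  refine (tendsto_nhds_unique (L.congr' ?_) R).trans (by simp)
  filter_upwards [h.filter_mono nhdsWithin_le_nhds, self_mem_nhdsWithin] with y hy hy0
  have hy0 : y ≠ 0 := hy0
  simp only [slope_def_field, h₁, h₂, sub_zero]
  field_simp
  linear_combination hy

/-- Second order expansion at a cuspidal point. -/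
lemma cusp_second_order {l₁ l₂ ρ₁ ρ₂ P Q : ℝ → ℝ} {x ρ₀ d₁ d₂ : ℝ}
    (hl₁ : ContinuousAt l₁ 0) (hl₂ : ContinuousAt l₂ 0)
    (hρ₁ : HasDerivAt ρ₁ d₁ 0) (hρ₂ : HasDerivAt ρ₂ d₂ 0) (h₁ : ρ₁ 0 = ρ₀) (h₂ : ρ₂ 0 = ρ₀)
    (hP : HasDerivAt P 0 0) (hQ : ContinuousAt Q 0)
    (h : ∀ᶠ y in nhds (0 : ℝ), l₁ y * (ρ₁ y - ρ₀) ^ 2 + l₂ y * (ρ₂ y - ρ₀) ^ 2 =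
      2 * y * P y + (3 * x ^ 2 * y ^ 2 - 5 * y ^ 4) * Q y) :
    P 0 = 0 ∧ l₁ 0 * d₁ ^ 2 + l₂ 0 * d₂ ^ 2 = 3 * x ^ 2 * Q 0 := by
  have hP0 : P 0 = 0 := by
    have := cusp_first_order (x := x) (l₁ := fun y => l₁ y * (ρ₁ y - ρ₀))
      (l₂ := fun y => l₂ y * (ρ₂ y - ρ₀)) (P := P)
      (hl₁.mul (hρ₁.continuousAt.sub continuousAt_const))
      (hl₂.mul (hρ₂.continuousAt.sub continuousAt_const)) hρ₁ hρ₂ h₁ h₂ hP.continuousAt hQ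
      (h.mono fun y hy => by linear_combination hy)
    simp only [h₁, h₂] at this
    linarith
  refine ⟨hP0, ?_⟩
  have t₁ := hasDerivAt_iff_tendsto_slope.1 hρ₁
  have t₂ := hasDerivAt_iff_tendsto_slope.1 hρ₂
  have tP := hasDerivAt_iff_tendsto_slope.1 hP
  have res : ∀ {g : ℝ → ℝ}, ContinuousAt g 0 → Tendsto g (nhdsWithin 0 {0}ᶜ) (nhds (g 0)) :=
    fun hg => hg.tendsto.mono_left nhdsWithin_le_nhds
  have L := ((res hl₁).mul (t₁.pow 2)).add ((res hl₂).mul (t₂.pow 2))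
  have hpol : ContinuousAt (fun y : ℝ => (3 * x ^ 2 - 5 * y ^ 2) * Q y) 0 := by fun_prop
  have R := (tP.const_mul 2).add (res hpol)
  refine (tendsto_nhds_unique (L.congr' ?_) R).trans (by simp)
  filter_upwards [h.filter_mono nhdsWithin_le_nhds, self_mem_nhdsWithin] with y hy hy0
  have hy0 : y ≠ 0 := hy0
  simp only [slope_def_field, h₁, h₂, hP0, sub_zero]
  field_simp
  linear_combination hy

lemma contDiff_fCS1m : ContDiff ℝ (⊤ : ℕ∞) fCS1m := by
  unfold fCS1m
  fun_prop

lemma fderiv_fCS1m (z e : R2) : fderiv ℝ fCS1m z e =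
    (e.1, 2 * z.2 * e.2, 2 * z.1 * z.2 ^ 3 * e.1 + (3 * z.1 ^ 2 * z.2 ^ 2 - 5 * z.2 ^ 4) * e.2) := by
  have h1 : HasFDerivAt (fun q : R2 => q.1) (ContinuousLinearMap.fst ℝ ℝ ℝ) z := hasFDerivAt_fst
  have h2 : HasFDerivAt (fun q : R2 => q.2) (ContinuousLinearMap.snd ℝ ℝ ℝ) z := hasFDerivAt_snd
  have h := h1.prodMk ((h2.pow 2).prodMk ((h2.pow 3).mul ((h1.pow 2).sub (h2.pow 2))))
  have h' : HasFDerivAt fCS1m _ z := h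
  rw [h'.fderiv]
  ext <;> simp
  ring

lemma clm_apply_R3 (L : R3 →L[ℝ] ℝ) (a b c : ℝ) :
    L (a, b, c) = a * L (1, 0, 0) + b * L (0, 1, 0) + c * L (0, 0, 1) := by
  have : ((a, b, c) : R3) = a • (1, 0, 0) + b • (0, 1, 0) + c • (0, 0, 1) := by
    ext <;> simp
  rw [this, map_add, map_add, map_smul, map_smul, map_smul]
  simp

/-- A sum of two curves with tangents `Wᵢ (1, rᵢ, rᵢ²)` that is brought to the cuspidal `S₁⁻`
normal form by the coordinate changes `(S₁, S₂)` and `T`. -/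
structure IsNullSumCusp (W₁ W₂ r₁ r₂ : ℝ → ℝ) (A B : Fin 3 → ℝ → ℝ) (S₁ S₂ : R2 → ℝ)
    (T : Fin 3 → R3 → ℝ) : Prop where
  smooth_W₁ : ContDiffAt ℝ 1 W₁ (S₁ 0)
  smooth_W₂ : ContDiffAt ℝ 1 W₂ (S₂ 0)
  W₁_ne : W₁ (S₁ 0) ≠ 0
  W₂_ne : W₂ (S₂ 0) ≠ 0
  smooth_r₁ : ContDiffAt ℝ 1 r₁ (S₁ 0)
  smooth_r₂ : ContDiffAt ℝ 1 r₂ (S₂ 0)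
  smooth_S₁ : ContDiffAt ℝ 2 S₁ 0
  smooth_S₂ : ContDiffAt ℝ 2 S₂ 0
  smooth_T : ∀ k, ContDiffAt ℝ 2 (T k) 0
  deriv_A : ∀ k, ∀ᶠ u in nhds (S₁ 0), HasDerivAt (A k) (W₁ u * r₁ u ^ (k : ℕ)) u
  deriv_B : ∀ k, ∀ᶠ v in nhds (S₂ 0), HasDerivAt (B k) (W₂ v * r₂ v ^ (k : ℕ)) v
  sum_eq : ∀ k, ∀ᶠ z in nhds (0 : R2), A k (S₁ z) + B k (S₂ z) = T k (fCS1m z)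
  nondeg_S : ∀ e, fderiv ℝ S₁ 0 e = 0 → fderiv ℝ S₂ 0 e = 0 → e = 0
  nondeg_T : ∀ e, (∀ k, fderiv ℝ (T k) 0 e = 0) → e = 0

namespace IsNullSumCusp

variable {W₁ W₂ r₁ r₂ : ℝ → ℝ} {A B : Fin 3 → ℝ → ℝ} {S₁ S₂ : R2 → ℝ} {T : Fin 3 → R3 → ℝ}

lemma fCS1m_zero : fCS1m 0 = 0 := by simp [fCS1m]

lemma tendsto_fCS1m : Tendsto fCS1m (nhds 0) (nhds 0) := by
  simpa [fCS1m_zero] using contDiff_fCS1m.continuous.tendsto 0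

/-- The chain rule for the normal form identity. -/
lemma chain (h : IsNullSumCusp W₁ W₂ r₁ r₂ A B S₁ S₂ T) :
    ∀ᶠ z in nhds (0 : R2), ∀ (k : Fin 3) (e : R2),
      W₁ (S₁ z) * r₁ (S₁ z) ^ (k : ℕ) * fderiv ℝ S₁ z e +
        W₂ (S₂ z) * r₂ (S₂ z) ^ (k : ℕ) * fderiv ℝ S₂ z e =
      e.1 * fderiv ℝ (T k) (fCS1m z) (1, 0, 0) +
        2 * z.2 * e.2 * fderiv ℝ (T k) (fCS1m z) (0, 1, 0) +
        (2 * z.1 * z.2 ^ 3 * e.1 + (3 * z.1 ^ 2 * z.2 ^ 2 - 5 * z.2 ^ 4) * e.2) *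
          fderiv ℝ (T k) (fCS1m z) (0, 0, 1) := by
  filter_upwards [h.smooth_S₁.eventually (by simp), h.smooth_S₂.eventually (by simp),
    h.smooth_S₁.continuousAt.eventually (eventually_all.2 h.deriv_A),
    h.smooth_S₂.continuousAt.eventually (eventually_all.2 h.deriv_B),
    tendsto_fCS1m.eventually (eventually_all.2 fun k => (h.smooth_T k).eventually (by simp)),
    (eventually_all.2 h.sum_eq).eventually_nhds] with z z1 z2 z3 z4 z5 z6 k e
  have d1 := (z3 k).comp_hasFDerivAt z (z1.differentiableAt (by simp)).hasFDerivAt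
  have d2 := (z4 k).comp_hasFDerivAt z (z2.differentiableAt (by simp)).hasFDerivAt
  have dT := ((z5 k).differentiableAt (by simp)).hasFDerivAt.comp z
    (contDiff_fCS1m.differentiable (by simp) z).hasFDerivAt
  have hu := (d1.add d2).unique (dT.congr_of_eventuallyEq (z6.mono fun y hy => hy k))
  have := congrArg (fun L : R2 →L[ℝ] ℝ => L e) hu
  simp only [add_apply, smul_apply, smul_eq_mul,
    ContinuousLinearMap.comp_apply, fderiv_fCS1m] at this
  rw [clm_apply_R3] at this
  exact this

lemma tendsto_axis : Tendsto (fun x : ℝ => ((x, 0) : R2)) (nhds 0) (nhds 0) := by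
  have : Continuous (fun x : ℝ => ((x, 0) : R2)) := by fun_prop
  exact this.tendsto' 0 0 rfl

lemma continuousAt_fderiv_S₁ (h : IsNullSumCusp W₁ W₂ r₁ r₂ A B S₁ S₂ T) (e : R2) :
    ContinuousAt (fun z => fderiv ℝ S₁ z e) 0 :=
  (h.smooth_S₁.continuousAt_fderiv (by simp)).clm_apply continuousAt_const

lemma continuousAt_fderiv_S₂ (h : IsNullSumCusp W₁ W₂ r₁ r₂ A B S₁ S₂ T) (e : R2) :
    ContinuousAt (fun z => fderiv ℝ S₂ z e) 0 :=
  (h.smooth_S₂.continuousAt_fderiv (by simp)).clm_apply continuousAt_const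

lemma null_zero (h : IsNullSumCusp W₁ W₂ r₁ r₂ A B S₁ S₂ T) :
    W₁ (S₁ 0) * fderiv ℝ S₁ 0 (0, 1) + W₂ (S₂ 0) * fderiv ℝ S₂ 0 (0, 1) = 0 := by
  simpa using h.chain.self_of_nhds 0 (0, 1)

lemma fderiv_S₁_ne (h : IsNullSumCusp W₁ W₂ r₁ r₂ A B S₁ S₂ T) :
    fderiv ℝ S₁ 0 (0, 1) ≠ 0 := by
  intro h1
  have h2 := h.null_zero
  rw [h1, mul_zero, zero_add] at h2
  simpa using h.nondeg_S _ h1 ((mul_eq_zero.1 h2).resolve_left h.W₂_ne)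

/-- The expansion of the normal form along the cuspidal edge. -/
lemma along_axis (h : IsNullSumCusp W₁ W₂ r₁ r₂ A B S₁ S₂ T) :
    ∀ᶠ x : ℝ in nhds 0, ∀ z : R2, z = (x, 0) → ∀ ρ, ρ = r₁ (S₁ z) →
      r₂ (S₂ z) = ρ ∧
      W₁ (S₁ z) * fderiv ℝ S₁ z (0, 1) + W₂ (S₂ z) * fderiv ℝ S₂ z (0, 1) = 0 ∧
      fderiv ℝ (T 2) (fCS1m z) (0, 1, 0) - 2 * ρ * fderiv ℝ (T 1) (fCS1m z) (0, 1, 0) +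
        ρ ^ 2 * fderiv ℝ (T 0) (fCS1m z) (0, 1, 0) = 0 ∧
      W₁ (S₁ z) * fderiv ℝ S₁ z (0, 1) * (deriv r₁ (S₁ z) * fderiv ℝ S₁ z (0, 1)) +
        W₂ (S₂ z) * fderiv ℝ S₂ z (0, 1) * (deriv r₂ (S₂ z) * fderiv ℝ S₂ z (0, 1)) =
        2 * (fderiv ℝ (T 1) (fCS1m z) (0, 1, 0) - ρ * fderiv ℝ (T 0) (fCS1m z) (0, 1, 0)) ∧
      W₁ (S₁ z) * fderiv ℝ S₁ z (0, 1) * (deriv r₁ (S₁ z) * fderiv ℝ S₁ z (0, 1)) ^ 2 +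
        W₂ (S₂ z) * fderiv ℝ S₂ z (0, 1) * (deriv r₂ (S₂ z) * fderiv ℝ S₂ z (0, 1)) ^ 2 =
        3 * x ^ 2 * (fderiv ℝ (T 2) (fCS1m z) (0, 0, 1) -
          2 * ρ * fderiv ℝ (T 1) (fCS1m z) (0, 0, 1) +
          ρ ^ 2 * fderiv ℝ (T 0) (fCS1m z) (0, 0, 1)) := by
  filter_upwards [tendsto_axis.eventually (h.smooth_S₁.eventually (by simp)),
    tendsto_axis.eventually (h.smooth_S₂.eventually (by simp)),
    tendsto_axis.eventually (h.smooth_S₁.continuousAt.eventually (h.smooth_W₁.eventually (by simp))),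
    tendsto_axis.eventually (h.smooth_S₂.continuousAt.eventually (h.smooth_W₂.eventually (by simp))),
    tendsto_axis.eventually (h.smooth_S₁.continuousAt.eventually (h.smooth_r₁.eventually (by simp))),
    tendsto_axis.eventually (h.smooth_S₂.continuousAt.eventually (h.smooth_r₂.eventually (by simp))),
    tendsto_axis.eventually (tendsto_fCS1m.eventually
      (eventually_all.2 fun k => (h.smooth_T k).eventually (by simp))),
    tendsto_axis.eventually h.chain.eventually_nhds,
    tendsto_axis.eventually ((h.smooth_S₁.continuousAt.eventually
      (h.smooth_W₁.continuousAt.eventually_ne h.W₁_ne))),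
    tendsto_axis.eventually ((h.continuousAt_fderiv_S₁ (0, 1)).eventually_ne h.fderiv_S₁_ne)]
    with x cS₁ cS₂ cW₁ cW₂ cr₁ cr₂ cT hch hW hp z hz ρ hρ
  subst hz
  have hz0 := hch.self_of_nhds
  have hnull : W₁ (S₁ (x, 0)) * fderiv ℝ S₁ (x, 0) (0, 1) +
      W₂ (S₂ (x, 0)) * fderiv ℝ S₂ (x, 0) (0, 1) = 0 := by
    simpa using hz0 0 (0, 1)
  have hnull1 : W₁ (S₁ (x, 0)) * r₁ (S₁ (x, 0)) * fderiv ℝ S₁ (x, 0) (0, 1) +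
      W₂ (S₂ (x, 0)) * r₂ (S₂ (x, 0)) * fderiv ℝ S₂ (x, 0) (0, 1) = 0 := by
    simpa using hz0 1 (0, 1)
  have hρ2 : r₂ (S₂ (x, 0)) = ρ := by
    have : W₁ (S₁ (x, 0)) * fderiv ℝ S₁ (x, 0) (0, 1) * (r₂ (S₂ (x, 0)) - ρ) = 0 := by
      rw [hρ]
      linear_combination r₂ (S₂ (x, 0)) * hnull - hnull1
    exact sub_eq_zero.1 ((mul_eq_zero.1 this).resolve_left (mul_ne_zero hW hp))
  -- the transversal line through `(x, 0)`
  have dline : HasDerivAt (fun y : ℝ => ((x, y) : R2)) (0, 1) 0 :=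
    (hasDerivAt_const 0 x).prodMk (hasDerivAt_id 0)
  have cline : ContinuousAt (fun y : ℝ => ((x, y) : R2)) 0 := dline.continuousAt
  have dS₁ : HasDerivAt (fun y : ℝ => S₁ (x, y)) (fderiv ℝ S₁ (x, 0) (0, 1)) 0 :=
    (cS₁.differentiableAt (by simp)).hasFDerivAt.comp_hasDerivAt 0 dline
  have dS₂ : HasDerivAt (fun y : ℝ => S₂ (x, y)) (fderiv ℝ S₂ (x, 0) (0, 1)) 0 :=
    (cS₂.differentiableAt (by simp)).hasFDerivAt.comp_hasDerivAt 0 dline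
  have dr₁ : HasDerivAt (fun y : ℝ => r₁ (S₁ (x, y)))
      (deriv r₁ (S₁ (x, 0)) * fderiv ℝ S₁ (x, 0) (0, 1)) 0 :=
    HasDerivAt.comp (h₂ := r₁) 0 (cr₁.differentiableAt (by simp)).hasDerivAt dS₁
  have dr₂ : HasDerivAt (fun y : ℝ => r₂ (S₂ (x, y)))
      (deriv r₂ (S₂ (x, 0)) * fderiv ℝ S₂ (x, 0) (0, 1)) 0 :=
    HasDerivAt.comp (h₂ := r₂) 0 (cr₂.differentiableAt (by simp)).hasDerivAt dS₂
  have cl₁ : ContinuousAt (fun y : ℝ => W₁ (S₁ (x, y)) * fderiv ℝ S₁ (x, y) (0, 1)) 0 := by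
    refine ContinuousAt.mul ?_ ?_
    · exact ContinuousAt.comp (g := W₁) cW₁.continuousAt dS₁.continuousAt
    · exact ContinuousAt.comp (g := fun z => fderiv ℝ S₁ z (0, 1))
        ((cS₁.continuousAt_fderiv (by simp)).clm_apply continuousAt_const) cline
  have cl₂ : ContinuousAt (fun y : ℝ => W₂ (S₂ (x, y)) * fderiv ℝ S₂ (x, y) (0, 1)) 0 := by
    refine ContinuousAt.mul ?_ ?_
    · exact ContinuousAt.comp (g := W₂) cW₂.continuousAt dS₂.continuousAt
    · exact ContinuousAt.comp (g := fun z => fderiv ℝ S₂ z (0, 1))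
        ((cS₂.continuousAt_fderiv (by simp)).clm_apply continuousAt_const) cline
  have dk : HasDerivAt (fun y : ℝ => fCS1m (x, y)) 0 0 := by
    have := (contDiff_fCS1m.differentiable (by simp) (x, 0)).hasFDerivAt.comp_hasDerivAt
      (f := fun y : ℝ => ((x, y) : R2)) 0 dline
    refine this.congr_deriv ?_
    rw [fderiv_fCS1m]
    simp
  have dT : ∀ (k : Fin 3) (e : R3),
      HasDerivAt (fun y : ℝ => fderiv ℝ (T k) (fCS1m (x, y)) e) 0 0 := fun k e => by
    have h1 : DifferentiableAt ℝ (fderiv ℝ (T k)) (fCS1m (x, 0)) :=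
      ((cT k).fderiv_right (m := 1) (by norm_num)).differentiableAt (by simp)
    have h2 := (h1.hasFDerivAt.comp_hasDerivAt (f := fun y : ℝ => fCS1m (x, y)) 0 dk).clm_apply
      (hasDerivAt_const 0 e)
    exact h2.congr_deriv (by simp)
  have hev : ∀ᶠ y : ℝ in nhds 0, ∀ k : Fin 3,
      W₁ (S₁ (x, y)) * r₁ (S₁ (x, y)) ^ (k : ℕ) * fderiv ℝ S₁ (x, y) (0, 1) +
        W₂ (S₂ (x, y)) * r₂ (S₂ (x, y)) ^ (k : ℕ) * fderiv ℝ S₂ (x, y) (0, 1) =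
      2 * y * fderiv ℝ (T k) (fCS1m (x, y)) (0, 1, 0) +
        (3 * x ^ 2 * y ^ 2 - 5 * y ^ 4) * fderiv ℝ (T k) (fCS1m (x, y)) (0, 0, 1) := by
    filter_upwards [cline.eventually hch] with y hy k
    simpa using hy k (0, 1)
  have hfirst := cusp_first_order (x := x) (ρ₀ := ρ)
    (P := fun y => fderiv ℝ (T 1) (fCS1m (x, y)) (0, 1, 0) -
      ρ * fderiv ℝ (T 0) (fCS1m (x, y)) (0, 1, 0))
    (Q := fun y => fderiv ℝ (T 1) (fCS1m (x, y)) (0, 0, 1) -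
      ρ * fderiv ℝ (T 0) (fCS1m (x, y)) (0, 0, 1)) cl₁ cl₂ dr₁ dr₂ hρ.symm hρ2
    ((dT 1 _).sub ((dT 0 _).const_mul ρ)).continuousAt
    ((dT 1 _).sub ((dT 0 _).const_mul ρ)).continuousAt
    (hev.mono fun y hy => by
      have h0 := hy 0
      have h1 := hy 1
      simp only [Fin.val_zero, Fin.val_one, pow_zero, pow_one, mul_one] at h0 h1
      linear_combination h1 - ρ * h0)
  have hsecond := cusp_second_order (x := x) (ρ₀ := ρ)
    (P := fun y => fderiv ℝ (T 2) (fCS1m (x, y)) (0, 1, 0) -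
      2 * ρ * fderiv ℝ (T 1) (fCS1m (x, y)) (0, 1, 0) +
      ρ ^ 2 * fderiv ℝ (T 0) (fCS1m (x, y)) (0, 1, 0))
    (Q := fun y => fderiv ℝ (T 2) (fCS1m (x, y)) (0, 0, 1) -
      2 * ρ * fderiv ℝ (T 1) (fCS1m (x, y)) (0, 0, 1) +
      ρ ^ 2 * fderiv ℝ (T 0) (fCS1m (x, y)) (0, 0, 1)) cl₁ cl₂ dr₁ dr₂ hρ.symm hρ2
    ((((dT 2 _).sub ((dT 1 _).const_mul (2 * ρ))).add ((dT 0 _).const_mul (ρ ^ 2))).congr_deriv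
      (by simp))
    (((dT 2 _).sub ((dT 1 _).const_mul (2 * ρ))).add ((dT 0 _).const_mul (ρ ^ 2))).continuousAt
    (hev.mono fun y hy => by
      have h0 := hy 0
      have h1 := hy 1
      have h2 := hy 2
      simp only [Fin.val_zero, Fin.val_one, Fin.val_two, pow_zero, pow_one, mul_one] at h0 h1 h2
      linear_combination h2 - 2 * ρ * h1 + ρ ^ 2 * h0)
  exact ⟨hρ2, hnull, hsecond.1, hfirst, hsecond.2⟩

/-- The normal form forces both the transversal and the conormal coefficients to be nonzero. -/
lemma conormal_ne (h : IsNullSumCusp W₁ W₂ r₁ r₂ A B S₁ S₂ T) {ρ : ℝ} (hρ : ρ = r₁ (S₁ 0)) :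
    fderiv ℝ (T 1) 0 (0, 1, 0) - ρ * fderiv ℝ (T 0) 0 (0, 1, 0) ≠ 0 ∧
      fderiv ℝ (T 2) 0 (0, 0, 1) - 2 * ρ * fderiv ℝ (T 1) 0 (0, 0, 1) +
        ρ ^ 2 * fderiv ℝ (T 0) 0 (0, 0, 1) ≠ 0 := by
  obtain ⟨hρ2, -, hP, -, -⟩ := h.along_axis.self_of_nhds 0 rfl ρ hρ
  rw [fCS1m_zero] at hP
  have hc := h.chain.self_of_nhds
  rw [fCS1m_zero, ← hρ, hρ2] at hc
  have c0 := hc 0 (1, 0)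
  have c1 := hc 1 (1, 0)
  have c2 := hc 2 (1, 0)
  simp only [Prod.fst_zero, Prod.snd_zero] at c0 c1 c2
  simp at c0 c1 c2
  set t0 := fderiv ℝ (T 0) 0
  set t1 := fderiv ℝ (T 1) 0
  set t2 := fderiv ℝ (T 2) 0
  have e1 : t1 (1, 0, 0) = ρ * t0 (1, 0, 0) := by linear_combination ρ * c0 - c1
  have e2 : t2 (1, 0, 0) = ρ ^ 2 * t0 (1, 0, 0) := by linear_combination ρ ^ 2 * c0 - c2
  have nd : ∀ e, t0 e = 0 → t1 e = 0 → t2 e = 0 → e = 0 := fun e h0 h1 h2 =>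
    h.nondeg_T e fun k => by fin_cases k <;> assumption
  have ne1 : t0 (1, 0, 0) ≠ 0 := fun h0 => by
    have := nd (1, 0, 0) h0 (by rw [e1, h0, mul_zero]) (by rw [e2, h0, mul_zero])
    simp at this
  have hL : t1 (0, 1, 0) - ρ * t0 (0, 1, 0) ≠ 0 := fun hL => by
    have := nd (t0 (0, 1, 0), -t0 (1, 0, 0), 0)
      (by rw [clm_apply_R3]; ring)
      (by rw [clm_apply_R3, e1]; linear_combination -t0 (1, 0, 0) * hL)
      (by rw [clm_apply_R3, e2]
          linear_combination -t0 (1, 0, 0) * hP - 2 * ρ * t0 (1, 0, 0) * hL)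
    simp only [Prod.mk_eq_zero] at this
    exact ne1 (neg_eq_zero.1 this.2.1)
  refine ⟨hL, fun hN => ?_⟩
  -- otherwise `(0, 0, 1)` would be a combination of the other two directions
  set L := t1 (0, 1, 0) - ρ * t0 (0, 1, 0) with hLdef
  set M := t1 (0, 0, 1) - ρ * t0 (0, 0, 1) with hMdef
  have := nd (t0 (0, 1, 0) * M - t0 (0, 0, 1) * L, -t0 (1, 0, 0) * M, t0 (1, 0, 0) * L)
    (by rw [clm_apply_R3]; ring)
    (by rw [clm_apply_R3, e1]
        linear_combination t0 (1, 0, 0) * M * hLdef - t0 (1, 0, 0) * L * hMdef)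
    (by rw [clm_apply_R3, e2]
        linear_combination -t0 (1, 0, 0) * M * hP + t0 (1, 0, 0) * L * hN
          + 2 * ρ * t0 (1, 0, 0) * M * hLdef - 2 * ρ * t0 (1, 0, 0) * L * hMdef)
  simp only [Prod.mk_eq_zero] at this
  exact mul_ne_zero ne1 hL this.2.2

lemma eventually_pos_or_neg {g : ℝ → ℝ} (hg : ContinuousAt g 0) (h0 : g 0 ≠ 0) :
    (∀ᶠ x in nhds 0, 0 < g x) ∨ (∀ᶠ x in nhds 0, g x < 0) := by
  rcases lt_or_gt_of_ne h0 with h | h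
  · exact Or.inr (hg.eventually_lt_const h)
  · exact Or.inl (hg.eventually_const_lt h)

/-- A function tied to `x²` by nonvanishing continuous factors has a definite sign. -/
lemma definite_of_mul_eq_sq {a b D N : ℝ → ℝ} (hD : ContinuousAt D 0) (hN : ContinuousAt N 0)
    (hD0 : D 0 ≠ 0) (hN0 : N 0 ≠ 0)
    (h : ∀ᶠ x in nhds (0 : ℝ), (a x - b x) * D x = x ^ 2 * N x) :
    (∀ᶠ x in nhds (0 : ℝ), x ≠ 0 → a x < b x) ∨ (∀ᶠ x in nhds (0 : ℝ), x ≠ 0 → b x < a x) := by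
  have hDN : ContinuousAt (fun x => D x * N x) 0 := hD.mul hN
  have hDn := hD.eventually_ne hD0
  rcases eventually_pos_or_neg hDN (mul_ne_zero hD0 hN0) with hp | hp
  · refine Or.inr ?_
    filter_upwards [h, hp, hDn] with x hx hpx hd hx0
    have h1 : (a x - b x) * D x ^ 2 = x ^ 2 * (D x * N x) := by linear_combination D x * hx
    have h2 : 0 < (a x - b x) * D x ^ 2 := by rw [h1]; positivity
    linarith [pos_of_mul_pos_left h2 (sq_nonneg _)]
  · refine Or.inl ?_
    filter_upwards [h, hp, hDn] with x hx hpx hd hx0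
    have h1 : (b x - a x) * D x ^ 2 = x ^ 2 * -(D x * N x) := by linear_combination -D x * hx
    have h3 : 0 < -(D x * N x) := neg_pos.2 hpx
    have h2 : 0 < (b x - a x) * D x ^ 2 := by rw [h1]; positivity
    linarith [pos_of_mul_pos_left h2 (sq_nonneg _)]

lemma hasDerivAt_axis {S : R2 → ℝ} {x : ℝ} (hS : ContDiffAt ℝ 2 S (x, 0)) :
    HasDerivAt (fun x : ℝ => S (x, 0)) (fderiv ℝ S (x, 0) (1, 0)) x :=
  (hS.differentiableAt (by simp)).hasFDerivAt.comp_hasDerivAt x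
    ((hasDerivAt_id x).prodMk (hasDerivAt_const x 0))

lemma continuousAt_deriv_of_contDiffAt {r : ℝ → ℝ} {u : ℝ} (hr : ContDiffAt ℝ 1 r u) :
    ContinuousAt (deriv r) u :=
  (hr.continuousAt_fderiv (by simp)).clm_apply continuousAt_const

lemma or_on_Ioo {p q : ℝ → Prop} (h : (∀ᶠ x in nhds 0, p x) ∨ (∀ᶠ x in nhds 0, q x)) :
    ∃ ε > 0, ∀ δ ≤ ε, (∀ x ∈ Set.Ioo (-δ) δ, p x) ∨ (∀ x ∈ Set.Ioo (-δ) δ, q x) := by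
  have key : ∀ {p : ℝ → Prop}, (∀ᶠ x in nhds 0, p x) →
      ∃ ε > 0, ∀ δ ≤ ε, ∀ x ∈ Set.Ioo (-δ) δ, p x := fun hp => by
    obtain ⟨ε, hε, hb⟩ := Metric.eventually_nhds_iff_ball.1 hp
    refine ⟨ε, hε, fun δ hδ x hx => hb x ?_⟩
    rw [Real.ball_eq_Ioo, zero_sub, zero_add]
    exact ⟨by linarith [hx.1], by linarith [hx.2]⟩
  rcases h with h | h
  · obtain ⟨ε, hε, hb⟩ := key h
    exact ⟨ε, hε, fun δ hδ => Or.inl (hb δ hδ)⟩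
  · obtain ⟨ε, hε, hb⟩ := key h
    exact ⟨ε, hε, fun δ hδ => Or.inr (hb δ hδ)⟩

lemma eventually_mem_image_axis {S : R2 → ℝ} (hS : ContDiffAt ℝ 2 S 0)
    (hne : fderiv ℝ S 0 (1, 0) ≠ 0) {J : Set ℝ} (hJ : J ∈ nhds 0) :
    ∀ᶠ z in nhds 0, S z ∈ (fun x : ℝ => S (x, 0)) '' J := by
  have hd : HasStrictDerivAt (fun x : ℝ => S (x, 0)) (fderiv ℝ S 0 (1, 0)) 0 :=
    HasStrictFDerivAt.comp_hasStrictDerivAt (l := S) (f := fun x : ℝ => ((x, 0) : R2)) 0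
      (hS.hasStrictFDerivAt (by simp))
      ((hasStrictDerivAt_id 0).prodMk (hasStrictDerivAt_const 0 0))
  refine hS.continuousAt.eventually ?_
  have := hd.map_nhds_eq hne
  rw [show S 0 = (fun x : ℝ => S (x, 0)) 0 from rfl, ← this]
  exact image_mem_map hJ

/-- Such a surface has no double points near its cuspidal point. -/
theorem no_double_points (h : IsNullSumCusp W₁ W₂ r₁ r₂ A B S₁ S₂ T) :
    ∀ᶠ u : ℝ in nhds 0, S₁ (u, u) = S₁ (u, -u) ∧ S₂ (u, u) = S₂ (u, -u) := by
  have t := tendsto_axis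
  have axis_cont : ∀ {g : R2 → ℝ}, ContinuousAt g 0 → ContinuousAt (fun x : ℝ => g (x, 0)) 0 :=
    fun {g} hg => Tendsto.comp (g := g) hg t
  have cS₁ := h.smooth_S₁.continuousAt
  have cS₂ := h.smooth_S₂.continuousAt
  have cW₁ : ContinuousAt (fun x : ℝ => W₁ (S₁ (x, 0))) 0 :=
    axis_cont (ContinuousAt.comp (g := W₁) h.smooth_W₁.continuousAt cS₁)
  have cW₂ : ContinuousAt (fun x : ℝ => W₂ (S₂ (x, 0))) 0 :=
    axis_cont (ContinuousAt.comp (g := W₂) h.smooth_W₂.continuousAt cS₂)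
  have cρ : ContinuousAt (fun x : ℝ => r₁ (S₁ (x, 0))) 0 :=
    axis_cont (ContinuousAt.comp (g := r₁) h.smooth_r₁.continuousAt cS₁)
  have cr₁ : ContinuousAt (fun x : ℝ => deriv r₁ (S₁ (x, 0))) 0 :=
    axis_cont (ContinuousAt.comp (g := deriv r₁) (continuousAt_deriv_of_contDiffAt h.smooth_r₁) cS₁)
  have cr₂ : ContinuousAt (fun x : ℝ => deriv r₂ (S₂ (x, 0))) 0 :=
    axis_cont (ContinuousAt.comp (g := deriv r₂) (continuousAt_deriv_of_contDiffAt h.smooth_r₂) cS₂)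
  have cγ₁ : ContinuousAt (fun x : ℝ => fderiv ℝ S₁ (x, 0) (1, 0)) 0 :=
    axis_cont (h.continuousAt_fderiv_S₁ (1, 0))
  have cγ₂ : ContinuousAt (fun x : ℝ => fderiv ℝ S₂ (x, 0) (1, 0)) 0 :=
    axis_cont (h.continuousAt_fderiv_S₂ (1, 0))
  have cp₁ : ContinuousAt (fun x : ℝ => fderiv ℝ S₁ (x, 0) (0, 1)) 0 :=
    axis_cont (h.continuousAt_fderiv_S₁ (0, 1))
  have cT : ∀ (k : Fin 3) (e : R3),
      ContinuousAt (fun x : ℝ => fderiv ℝ (T k) (fCS1m (x, 0)) e) 0 := fun k e => by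
    refine axis_cont (g := fun z => fderiv ℝ (T k) (fCS1m z) e) (ContinuousAt.comp
      (g := fun w => fderiv ℝ (T k) w e) (f := fCS1m) ?_ contDiff_fCS1m.continuous.continuousAt)
    rw [fCS1m_zero]
    exact ((h.smooth_T k).continuousAt_fderiv (by simp)).clm_apply continuousAt_const
  -- both parameters of the singular curve are regular
  have hγ : ∀ᶠ x : ℝ in nhds 0,
      deriv r₁ (S₁ (x, 0)) * fderiv ℝ S₁ (x, 0) (1, 0) =
        deriv r₂ (S₂ (x, 0)) * fderiv ℝ S₂ (x, 0) (1, 0) ∧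
      HasDerivAt (fun x : ℝ => r₁ (S₁ (x, 0)))
        (deriv r₁ (S₁ (x, 0)) * fderiv ℝ S₁ (x, 0) (1, 0)) x := by
    filter_upwards [t.eventually (h.smooth_S₁.eventually (by simp)),
      t.eventually (h.smooth_S₂.eventually (by simp)),
      t.eventually (cS₁.eventually (h.smooth_r₁.eventually (by simp))),
      t.eventually (cS₂.eventually (h.smooth_r₂.eventually (by simp))),
      h.along_axis.eventually_nhds] with x s1 s2 s3 s4 s5
    have d1 : HasDerivAt (fun x : ℝ => r₁ (S₁ (x, 0))) _ x :=
      HasDerivAt.comp (h₂ := r₁) x (s3.differentiableAt (by simp)).hasDerivAt (hasDerivAt_axis s1)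
    have d2 : HasDerivAt (fun x : ℝ => r₂ (S₂ (x, 0))) _ x :=
      HasDerivAt.comp (h₂ := r₂) x (s4.differentiableAt (by simp)).hasDerivAt (hasDerivAt_axis s2)
    exact ⟨d1.unique (d2.congr_of_eventuallyEq (s5.mono fun y hy => (hy _ rfl _ rfl).1.symm)), d1⟩
  obtain ⟨hL, hN⟩ := h.conormal_ne rfl
  obtain ⟨-, n0, -, f0, g0⟩ := h.along_axis.self_of_nhds 0 rfl _ rfl
  rw [fCS1m_zero] at f0 g0
  have γ0 := hγ.self_of_nhds.1
  rw [show ((0 : ℝ), (0 : ℝ)) = (0 : R2) from rfl] at γ0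
  have p₁_ne := h.fderiv_S₁_ne
  have f0' : W₁ (S₁ 0) * fderiv ℝ S₁ 0 (0, 1) * (deriv r₁ (S₁ 0) * fderiv ℝ S₁ 0 (0, 1) -
      deriv r₂ (S₂ 0) * fderiv ℝ S₂ 0 (0, 1)) ≠ 0 := by
    refine ne_of_eq_of_ne ?_ (mul_ne_zero two_ne_zero hL)
    linear_combination f0 - deriv r₂ (S₂ 0) * fderiv ℝ S₂ 0 (0, 1) * n0
  have q0 : deriv r₁ (S₁ 0) * fderiv ℝ S₁ 0 (0, 1) + deriv r₂ (S₂ 0) * fderiv ℝ S₂ 0 (0, 1)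
      = 0 := by
    refine (mul_eq_zero.1 ?_).resolve_left f0'
    linear_combination g0 - (deriv r₂ (S₂ 0) * fderiv ℝ S₂ 0 (0, 1)) ^ 2 * n0
  have r₁_ne : deriv r₁ (S₁ 0) ≠ 0 := fun h0 => f0' (by
    rw [h0, zero_mul, zero_add] at q0
    rw [h0, q0]; ring)
  have r₂_ne : deriv r₂ (S₂ 0) ≠ 0 := fun h0 => by
    rw [h0, zero_mul, add_zero] at q0
    exact mul_ne_zero r₁_ne p₁_ne q0
  have γ₁_ne : fderiv ℝ S₁ 0 (1, 0) ≠ 0 := fun h0 => by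
    rw [h0, mul_zero] at γ0
    simpa using h.nondeg_S _ h0 ((mul_eq_zero.1 γ0.symm).resolve_left r₂_ne)
  have γ₂_ne : fderiv ℝ S₂ 0 (1, 0) ≠ 0 := fun h0 => by
    rw [h0, mul_zero] at γ0
    exact mul_ne_zero r₁_ne γ₁_ne γ0
  -- the densities of the two curves along the singular curve
  set a : ℝ → ℝ := fun x => W₁ (S₁ (x, 0)) * fderiv ℝ S₁ (x, 0) (1, 0) with ha
  set b : ℝ → ℝ := fun x => W₂ (S₂ (x, 0)) * fderiv ℝ S₂ (x, 0) (1, 0) with hb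
  have hkey : ∀ᶠ x in nhds (0 : ℝ), (a x - b x) * (fderiv ℝ S₁ (x, 0) (0, 1) *
      deriv r₂ (S₂ (x, 0)) * (2 * (fderiv ℝ (T 1) (fCS1m (x, 0)) (0, 1, 0) -
        r₁ (S₁ (x, 0)) * fderiv ℝ (T 0) (fCS1m (x, 0)) (0, 1, 0)))) =
      x ^ 2 * (-(3 * (W₂ (S₂ (x, 0)) * fderiv ℝ S₁ (x, 0) (1, 0) *
        (fderiv ℝ (T 2) (fCS1m (x, 0)) (0, 0, 1) -
          2 * r₁ (S₁ (x, 0)) * fderiv ℝ (T 1) (fCS1m (x, 0)) (0, 0, 1) +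
          r₁ (S₁ (x, 0)) ^ 2 * fderiv ℝ (T 0) (fCS1m (x, 0)) (0, 0, 1))))) := by
    filter_upwards [hγ, h.along_axis] with x hx hax
    obtain ⟨-, hn, -, hf, hg⟩ := hax _ rfl _ rfl
    have hc := hx.1
    simp only [ha, hb]
    rw [← hf]
    generalize deriv r₁ (S₁ (x, 0)) = R₁ at *
    generalize deriv r₂ (S₂ (x, 0)) = R₂ at *
    generalize W₁ (S₁ (x, 0)) = w₁ at *
    generalize W₂ (S₂ (x, 0)) = w₂ at *
    generalize fderiv ℝ S₁ (x, 0) (1, 0) = c₁ at *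
    generalize fderiv ℝ S₂ (x, 0) (1, 0) = c₂ at *
    generalize fderiv ℝ S₁ (x, 0) (0, 1) = p₁ at *
    generalize fderiv ℝ S₂ (x, 0) (0, 1) = p₂ at *
    have e1 : (w₁ * c₁ - w₂ * c₂) * (p₁ * R₂) = -w₂ * c₁ * (R₁ * p₁ + R₂ * p₂) := by
      linear_combination R₂ * c₁ * hn + w₂ * p₁ * hc
    linear_combination (w₁ * p₁ * (R₁ * p₁) + w₂ * p₂ * (R₂ * p₂)) * e1 - w₂ * c₁ * hg
      + w₂ * c₁ * R₁ * p₁ * R₂ * p₂ * (-1) * hn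
  have hzero : fCS1m ((0 : ℝ), (0 : ℝ)) = 0 := fCS1m_zero
  have hdef : (∀ᶠ x in nhds (0 : ℝ), x ≠ 0 → a x < b x) ∨
      (∀ᶠ x in nhds (0 : ℝ), x ≠ 0 → b x < a x) := by
    refine definite_of_mul_eq_sq ?_ ?_ ?_ ?_ hkey
    · exact (cp₁.mul cr₂).mul (continuousAt_const.mul ((cT 1 _).sub (cρ.mul (cT 0 _))))
    · exact (continuousAt_const.mul ((cW₂.mul cγ₁).mul (((cT 2 _).sub
        ((continuousAt_const.mul cρ).mul (cT 1 _))).add ((cρ.pow 2).mul (cT 0 _))))).neg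
    · simp only [hzero]
      exact mul_ne_zero (mul_ne_zero p₁_ne r₂_ne) (mul_ne_zero two_ne_zero hL)
    · simp only [hzero]
      exact neg_ne_zero.2 (mul_ne_zero three_ne_zero (mul_ne_zero (mul_ne_zero h.W₂_ne γ₁_ne) hN))
  have hab0 : a 0 = b 0 := by
    have := hkey.self_of_nhds
    rw [hzero, zero_pow two_ne_zero, zero_mul] at this
    exact sub_eq_zero.1 ((mul_eq_zero.1 this).resolve_right
      (mul_ne_zero (mul_ne_zero p₁_ne r₂_ne) (mul_ne_zero two_ne_zero hL)))
  have ha0 : a 0 ≠ 0 := mul_ne_zero h.W₁_ne γ₁_ne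
  have hposneg : (∀ᶠ x in nhds 0, 0 < a x ∧ 0 < b x) ∨ (∀ᶠ x in nhds 0, a x < 0 ∧ b x < 0) := by
    have ca : ContinuousAt a 0 := cW₁.mul cγ₁
    have cb : ContinuousAt b 0 := cW₂.mul cγ₂
    rcases lt_or_gt_of_ne ha0 with h1 | h1
    · exact Or.inr ((ca.eventually_lt_const h1).and (cb.eventually_lt_const (hab0 ▸ h1)))
    · exact Or.inl ((ca.eventually_const_lt h1).and (cb.eventually_const_lt (hab0 ▸ h1)))
  have hρsign := eventually_pos_or_neg (cr₁.mul cγ₁) (mul_ne_zero r₁_ne γ₁_ne)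
  have hAd : ∀ᶠ x in nhds (0 : ℝ), ∀ k : Fin 3,
      HasDerivAt (fun x : ℝ => A k (S₁ (x, 0))) (a x * r₁ (S₁ (x, 0)) ^ (k : ℕ)) x := by
    filter_upwards [t.eventually (h.smooth_S₁.eventually (by simp)),
      t.eventually (cS₁.eventually (eventually_all.2 h.deriv_A))] with x s1 s2 k
    exact (HasDerivAt.comp (h₂ := A k) x (s2 k) (hasDerivAt_axis s1)).congr_deriv
      (by simp only [ha]; ring)
  have hBd : ∀ᶠ x in nhds (0 : ℝ), ∀ k : Fin 3,
      HasDerivAt (fun x : ℝ => B k (S₂ (x, 0))) (b x * r₁ (S₁ (x, 0)) ^ (k : ℕ)) x := by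
    filter_upwards [t.eventually (h.smooth_S₂.eventually (by simp)),
      t.eventually (cS₂.eventually (eventually_all.2 h.deriv_B)), h.along_axis] with x s1 s2 s3 k
    refine (HasDerivAt.comp (h₂ := B k) x (s2 k) (hasDerivAt_axis s1)).congr_deriv ?_
    rw [(s3 _ rfl _ rfl).1]
    simp only [hb]; ring
  -- a common interval for all these properties
  obtain ⟨ε₀, hε₀, hI₀⟩ := or_on_Ioo (Or.inl (b := ∀ᶠ x : ℝ in nhds 0, False)
    (hAd.and (hBd.and (hγ.mono fun _ hx => hx.2))))
  obtain ⟨ε₁, hε₁, hI₁⟩ := or_on_Ioo hdef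
  obtain ⟨ε₂, hε₂, hI₂⟩ := or_on_Ioo hposneg
  obtain ⟨ε₃, hε₃, hI₃⟩ := or_on_Ioo hρsign
  obtain ⟨ε, hε, h0, h1, h2, h3⟩ : ∃ ε > 0, ε ≤ ε₀ ∧ ε ≤ ε₁ ∧ ε ≤ ε₂ ∧ ε ≤ ε₃ :=
    ⟨min (min ε₀ ε₁) (min ε₂ ε₃), lt_min (lt_min hε₀ hε₁) (lt_min hε₂ hε₃), by simp, by simp,
      by simp, by simp⟩
  have hmem : (0 : ℝ) ∈ Set.Ioo (-ε) ε := ⟨neg_lt_zero.2 hε, hε⟩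
  have hI := (hI₀ ε h0).resolve_right fun hF => hF 0 hmem
  have hρmono : StrictMonoOn (fun x : ℝ => r₁ (S₁ (x, 0))) (Set.Ioo (-ε) ε) ∨
      StrictAntiOn (fun x : ℝ => r₁ (S₁ (x, 0))) (Set.Ioo (-ε) ε) := by
    have hc : ContinuousOn (fun x : ℝ => r₁ (S₁ (x, 0))) (Set.Ioo (-ε) ε) :=
      fun x hx => (hI x hx).2.2.continuousAt.continuousWithinAt
    refine (hI₃ ε h3).imp (fun hs => strictMonoOn_of_deriv_pos (convex_Ioo _ _) hc ?_)
      (fun hs => strictAntiOn_of_deriv_neg (convex_Ioo _ _) hc ?_) <;>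
    · intro x hx
      rw [interior_Ioo] at hx
      rw [(hI x hx).2.2.deriv]
      exact hs x hx
  have hJ := Ioo_mem_nhds hmem.1 hmem.2
  have hin₁ := eventually_mem_image_axis h.smooth_S₁ γ₁_ne hJ
  have hin₂ := eventually_mem_image_axis h.smooth_S₂ γ₂_ne hJ
  have tp : Tendsto (fun u : ℝ => ((u, u) : R2)) (nhds 0) (nhds 0) :=
    (by fun_prop : Continuous fun u : ℝ => ((u, u) : R2)).tendsto' 0 0 rfl
  have tm : Tendsto (fun u : ℝ => ((u, -u) : R2)) (nhds 0) (nhds 0) :=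
    (by fun_prop : Continuous fun u : ℝ => ((u, -u) : R2)).tendsto' 0 0 (by simp)
  have hsum := eventually_all.2 h.sum_eq
  filter_upwards [tp.eventually hin₁, tp.eventually hin₂, tm.eventually hin₁, tm.eventually hin₂,
    tp.eventually hsum, tm.eventually hsum]
    with u ⟨s, hs, es⟩ ⟨τ, hτ, eτ⟩ ⟨s', hs', es'⟩ ⟨τ', hτ', eτ'⟩ hp hm
  have hk : fCS1m (u, u) = fCS1m (u, -u) := by simp [fCS1m]
  obtain ⟨e1, e2⟩ := eq_of_sum_eq Set.ordConnected_Ioo hρmono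
    (A := fun k x => A k (S₁ (x, 0))) (B := fun k x => B k (S₂ (x, 0)))
    (fun k x hx => (hI x hx).1 k) (fun k x hx => (hI x hx).2.1 k) (hI₂ ε h2) hab0
    (hI₁ ε h1) hs hs' hτ hτ' fun k => by
      simp only at es eτ es' eτ'
      simp only [es, eτ, es', eτ']
      rw [hp k, hm k, hk]
  rw [← es, ← es', ← eτ, ← eτ', e1, e2]
  exact ⟨rfl, rfl⟩

end IsNullSumCusp

/-- The three coordinates of `ℝ³` in which the null curves have tangents `W (1, r, r²)`. -/
def moment (k : Fin 3) : R3 →L[ℝ] ℝ :=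
  ![(ContinuousLinearMap.fst ℝ ℝ ℝ).comp (ContinuousLinearMap.snd ℝ ℝ (ℝ × ℝ)) -
      ContinuousLinearMap.fst ℝ ℝ (ℝ × ℝ),
    (ContinuousLinearMap.snd ℝ ℝ ℝ).comp (ContinuousLinearMap.snd ℝ ℝ (ℝ × ℝ)),
    -(ContinuousLinearMap.fst ℝ ℝ (ℝ × ℝ) +
      (ContinuousLinearMap.fst ℝ ℝ ℝ).comp (ContinuousLinearMap.snd ℝ ℝ (ℝ × ℝ)))] k

lemma moment_zero_apply (x : R3) : moment 0 x = x.2.1 - x.1 := by simp [moment]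
lemma moment_one_apply (x : R3) : moment 1 x = x.2.2 := by simp [moment]
lemma moment_two_apply (x : R3) : moment 2 x = -(x.1 + x.2.1) := by simp [moment]

lemma eq_zero_of_moment {x : R3} (h : ∀ k, moment k x = 0) : x = 0 := by
  have h0 := h 0
  have h1 := h 1
  have h2 := h 2
  rw [moment_zero_apply] at h0
  rw [moment_one_apply] at h1
  rw [moment_two_apply] at h2
  ext <;> simp <;> linarith

lemma fderiv_injective_of_leftInverse {E F : Type*} [NormedAddCommGroup E] [NormedSpace ℝ E]
    [NormedAddCommGroup F] [NormedSpace ℝ F] {G : E → F} {H : F → E} {x : E}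
    (hG : DifferentiableAt ℝ G x) (hH : DifferentiableAt ℝ H (G x))
    (h : ∀ᶠ y in nhds x, H (G y) = y) {e : E} (he : fderiv ℝ G x e = 0) : e = 0 := by
  have h1 := (hH.hasFDerivAt.comp x hG.hasFDerivAt).unique
    ((hasFDerivAt_id x).congr_of_eventuallyEq h)
  have h2 := congrArg (fun L : E →L[ℝ] E => L e) h1
  simpa [he] using h2.symm

namespace IsGTMS

variable {f : R2 → R3} {g1 g2 w1 w2 : ℝ → ℝ}

lemma hasDerivAt_fst (hf : IsGTMS f g1 g2 w1 w2) (u v : ℝ) :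
    HasDerivAt (fun u => f (u, v)) (pu f (u, v)) u :=
  (hf.smooth_f.differentiable (by simp) (u, v)).hasFDerivAt.comp_hasDerivAt u
    ((hasDerivAt_id u).prodMk (hasDerivAt_const u v))

lemma hasDerivAt_snd (hf : IsGTMS f g1 g2 w1 w2) (u v : ℝ) :
    HasDerivAt (fun v => f (u, v)) (pv f (u, v)) v :=
  (hf.smooth_f.differentiable (by simp) (u, v)).hasFDerivAt.comp_hasDerivAt v
    ((hasDerivAt_const v u).prodMk (hasDerivAt_id v))

/-- A timelike minimal surface is a sum of two null curves. -/
lemma eq_add (hf : IsGTMS f g1 g2 w1 w2) (u v u₀ v₀ : ℝ) :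
    f (u, v) = f (u, v₀) + (f (u₀, v) - f (u₀, v₀)) := by
  have hd : ∀ x, HasDerivAt (fun x => f (x, v) - f (x, v₀)) 0 x := fun x => by
    refine ((hf.hasDerivAt_fst x v).sub (hf.hasDerivAt_fst x v₀)).congr_deriv ?_
    rw [hf.deriv_u, hf.deriv_u, sub_self]
  have := is_const_of_deriv_eq_zero (fun x => (hd x).differentiableAt) (fun x => (hd x).deriv) u u₀
  rw [← sub_eq_iff_eq_add', ← this]

lemma moment_pu (hf : IsGTMS f g1 g2 w1 w2) (k : Fin 3) (p : R2) :
    moment k (pu f p) = w1 p.1 * g1 p.1 ^ (k : ℕ) := by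
  rw [hf.deriv_u]
  fin_cases k
  · simp only [Fin.zero_eta, moment_zero_apply]; simp; ring
  · simp only [Fin.mk_one, moment_one_apply]; simp; ring
  · simp only [Fin.reduceFinMk, moment_two_apply]; simp; ring

lemma moment_pv (hf : IsGTMS f g1 g2 w1 w2) (k : Fin 3) {p : R2} (hg : g2 p.2 ≠ 0) :
    moment k (pv f p) = -w2 p.2 * g2 p.2 ^ 2 * (g2 p.2)⁻¹ ^ (k : ℕ) := by
  rw [hf.deriv_v]
  fin_cases k
  · simp only [Fin.zero_eta, moment_zero_apply]; simp; ring
  · simp only [Fin.mk_one, moment_one_apply]; simp; field_simp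
  · simp only [Fin.reduceFinMk, moment_two_apply]; simp; field_simp; ring

/-- The Gauss map `g₂` has no zero at a point where `f` fails to be an immersion. -/
lemma g2_ne_zero (hf : IsGTMS f g1 g2 w1 w2) {p e : R2} (hw1 : w1 p.1 ≠ 0) (hw2 : w2 p.2 ≠ 0)
    (he : e ≠ 0) (h : fderiv ℝ f p e = 0) : g2 p.2 ≠ 0 := by
  intro hg
  have hsum : e.1 • pu f p + e.2 • pv f p = 0 := by
    rw [← h, pu, pv, ← map_smul, ← map_smul, ← map_add]
    congr 1
    ext <;> simp
  rw [hf.deriv_u, hf.deriv_v, hg] at hsum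
  simp only [Prod.smul_mk, Prod.mk_add_mk, smul_eq_mul, Prod.mk_eq_zero] at hsum
  obtain ⟨h1, h2, -⟩ := hsum
  have e1 : e.1 = 0 := by
    have : e.1 * w1 p.1 = 0 := by linear_combination h2 - h1
    exact (mul_eq_zero.1 this).resolve_right hw1
  have e2 : e.2 = 0 := by
    rw [e1] at h1
    have : e.2 * w2 p.2 = 0 := by linear_combination 2 * h1
    exact (mul_eq_zero.1 this).resolve_right hw2
  exact he (Prod.ext e1 e2)

end IsGTMS

/-- there is no cuspidal S₁⁻ singularity on any minface. -/
theorem no_cuspidal_S1_minus_on_minface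
    (f : R2 → R3) (g1 g2 w1 w2 : ℝ → ℝ) (hf : IsGTMS f g1 g2 w1 w2)
    (hw1 : ∀ u, w1 u ≠ 0) (hw2 : ∀ v, w2 v ≠ 0) :
    ∀ p : R2, ¬ AEquiv f p fCS1m (0, 0) := by
  rintro p ⟨Φ, Ψ, ⟨U, V, Φi, hU, hpU, hV, hpV, hΦ, hΦi, -, -, hΦl, hΦr⟩, hΦp,
    ⟨U', V', Ψi, hU', hpU', hV', hpV', hΨ, hΨi, -, -, hΨl, hΨr⟩, hΨp, hev⟩
  have hz : ((0 : ℝ), (0 : ℝ)) = (0 : R2) := rfl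
  rw [hz] at hΦp hΨp
  rw [IsNullSumCusp.fCS1m_zero] at hΨp
  rw [hΦp] at hpV
  rw [hΨp] at hpV'
  have hi : Φi 0 = p := by rw [← hΦp, hΦl p hpU]
  have hi' : Ψi 0 = f p := by rw [← hΨp, hΨl _ hpU']
  have sΦi := hΦi.contDiffAt (hV.mem_nhds hpV)
  have sΨi := hΨi.contDiffAt (hV'.mem_nhds hpV')
  have sΦ := hΦ.contDiffAt (hU.mem_nhds hpU)
  have sΨ := hΨ.contDiffAt (hU'.mem_nhds hpU')
  have two_le : (2 : WithTop ℕ∞) ≤ ((⊤ : ℕ∞) : WithTop ℕ∞) :=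
    WithTop.coe_le_coe.2 (le_top : (2 : ℕ∞) ≤ ⊤)
  have tΦi : Tendsto Φi (nhds 0) (nhds p) := hi ▸ sΦi.continuousAt
  have heq : ∀ᶠ z in nhds (0 : R2), f (Φi z) = Ψi (fCS1m z) := by
    filter_upwards [hV.mem_nhds hpV, tΦi.eventually hev,
      tΦi.eventually (hf.smooth_f.continuous.continuousAt.eventually (hU'.mem_nhds hpU'))]
      with z h1 h2 h3
    rw [← hΨl _ h3, h2, hΦr z h1]
  have injΦi : ∀ e, fderiv ℝ Φi 0 e = 0 → e = 0 := fun e =>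
    fderiv_injective_of_leftInverse (sΦi.differentiableAt (by simp))
      (by rw [hi]; exact sΦ.differentiableAt (by simp))
      (by filter_upwards [hV.mem_nhds hpV] with y hy using hΦr y hy)
  have injΨi : ∀ e, fderiv ℝ Ψi 0 e = 0 → e = 0 := fun e =>
    fderiv_injective_of_leftInverse (sΨi.differentiableAt (by simp))
      (by rw [hi']; exact sΨ.differentiableAt (by simp))
      (by filter_upwards [hV'.mem_nhds hpV'] with y hy using hΨr y hy)
  have dΦi := (sΦi.differentiableAt (by simp)).hasFDerivAt
  have dΨi := (sΨi.differentiableAt (by simp)).hasFDerivAt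
  -- the kernel of the differential of `f` at `p`
  have hg : g2 p.2 ≠ 0 := by
    refine hf.g2_ne_zero (hw1 _) (hw2 _) (e := fderiv ℝ Φi 0 (0, 1))
      (fun h0 => by simpa using injΦi _ h0) ?_
    have hfd := (hf.smooth_f.differentiable (by simp) (Φi 0)).hasFDerivAt.comp 0 dΦi
    have hTd := HasFDerivAt.comp (g := Ψi) (f := fCS1m) 0
      (by rw [IsNullSumCusp.fCS1m_zero]; exact dΨi)
      (contDiff_fCS1m.differentiable (by simp) 0).hasFDerivAt
    have := congrArg (fun L : R2 →L[ℝ] R3 => L (0, 1))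
      (hfd.unique (hTd.congr_of_eventuallyEq heq))
    have h0 : ((0 : ℝ), (0 : ℝ), (0 : ℝ)) = (0 : R3) := rfl
    simpa [fderiv_fCS1m, hi, h0] using this
  have hcusp : IsNullSumCusp w1 (fun v => -w2 v * g2 v ^ 2) g1 (fun v => (g2 v)⁻¹)
      (fun k u => moment k (f (u, p.2)))
      (fun k v => moment k (f (p.1, v) - f (p.1, p.2)))
      (fun z => (Φi z).1) (fun z => (Φi z).2) (fun k x => moment k (Ψi x)) := by
    have d₁ : fderiv ℝ (fun z => (Φi z).1) 0 =
        (ContinuousLinearMap.fst ℝ ℝ ℝ).comp (fderiv ℝ Φi 0) := dΦi.fst.fderiv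
    have d₂ : fderiv ℝ (fun z => (Φi z).2) 0 =
        (ContinuousLinearMap.snd ℝ ℝ ℝ).comp (fderiv ℝ Φi 0) := dΦi.snd.fderiv
    have dT : ∀ k, fderiv ℝ (fun x => moment k (Ψi x)) 0 = (moment k).comp (fderiv ℝ Ψi 0) :=
      fun k => ((moment k).hasFDerivAt.comp 0 dΨi).fderiv
    have one_le : (1 : WithTop ℕ∞) ≤ ((⊤ : ℕ∞) : WithTop ℕ∞) := by exact_mod_cast le_top
    have s1 : ContDiff ℝ 1 w2 := hf.smooth_w2.of_le one_le
    have s2 : ContDiff ℝ 1 g2 := hf.smooth_g2.of_le one_le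
    exact
      { smooth_W₁ := (hf.smooth_w1.of_le one_le).contDiffAt
        smooth_W₂ := (s1.neg.mul (s2.pow 2)).contDiffAt
        W₁_ne := hw1 _
        W₂_ne := by
          simp only [hi]
          exact mul_ne_zero (neg_ne_zero.2 (hw2 _)) (pow_ne_zero 2 hg)
        smooth_r₁ := (hf.smooth_g1.of_le one_le).contDiffAt
        smooth_r₂ := s2.contDiffAt.inv (by simpa only [hi] using hg)
        smooth_S₁ := (sΦi.of_le two_le).fst
        smooth_S₂ := (sΦi.of_le two_le).snd
        smooth_T := fun k => (moment k).contDiff.contDiffAt.comp 0 (sΨi.of_le two_le)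
        deriv_A := fun k => Eventually.of_forall fun u =>
          ((moment k).hasFDerivAt.comp_hasDerivAt u (hf.hasDerivAt_fst u p.2)).congr_deriv
            (hf.moment_pu k _)
        deriv_B := fun k => by
          simp only [hi]
          filter_upwards [s2.continuous.continuousAt.eventually_ne hg] with v hv
          exact ((moment k).hasFDerivAt.comp_hasDerivAt v
            ((hf.hasDerivAt_snd p.1 v).sub_const _)).congr_deriv (hf.moment_pv k hv)
        sum_eq := fun k => heq.mono fun z hz => by
          rw [← hz, ← map_add, ← hf.eq_add]
        nondeg_S := fun e h1 h2 => injΦi e (by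
          rw [d₁] at h1
          rw [d₂] at h2
          exact Prod.ext h1 h2)
        nondeg_T := fun e he => injΨi e (eq_zero_of_moment fun k => by
          have := he k
          rwa [dT] at this) }
  have tp : Tendsto (fun u : ℝ => ((u, u) : R2)) (nhds 0) (nhds 0) :=
    (by fun_prop : Continuous fun u : ℝ => ((u, u) : R2)).tendsto' 0 0 rfl
  have tm : Tendsto (fun u : ℝ => ((u, -u) : R2)) (nhds 0) (nhds 0) :=
    (by fun_prop : Continuous fun u : ℝ => ((u, -u) : R2)).tendsto' 0 0 (by simp)
  have hall : ∀ᶠ u : ℝ in nhds 0, u = 0 := by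
    filter_upwards [hcusp.no_double_points, tp.eventually (hV.mem_nhds hpV),
      tm.eventually (hV.mem_nhds hpV)] with u hu h1 h2
    have h3 := congrArg Φ (Prod.ext hu.1 hu.2 : Φi (u, u) = Φi (u, -u))
    rw [hΦr _ h1, hΦr _ h2, Prod.mk.injEq] at h3
    linarith [h3.2]
  obtain ⟨ε, hε, hb⟩ := Metric.eventually_nhds_iff.1 hall
  have := hb (y := ε / 2) (by rw [dist_zero_right, Real.norm_eq_abs, abs_of_pos] <;> linarith)
  linarith
end
end

section
/- The cuspidal edge is the only non-degenerate rank one ω-singular point at which a generalized timelike minimal surface is a front: if f is a generalized timelike minimal surface with real Weierstrass data (g1, g2, ω1 du, ω2 dv), and p is a non-degenerate ω-singular point with rank(df_p) = 1 at which f is a front, then f is A-equivalent at p to the cuspidal edge f_CE(u,v) = (u, v^2, v^3) at the origin. -/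
noncomputable section

open Real Filter

open Topology MeasureTheory
open scoped ContDiff

theorem ContDiff.hasDerivAt_iteratedDeriv {F : ℝ → ℝ} (hF : ContDiff ℝ ∞ F) (n : ℕ) (t : ℝ) :
    HasDerivAt (iteratedDeriv n F) (iteratedDeriv (n + 1) F t) t := by
  rw [iteratedDeriv_succ]
  exact (hF.differentiable_iteratedDeriv n (by exact_mod_cast WithTop.coe_lt_top _) t).hasDerivAt

theorem contDiff_integral_comp_mul {α : Type*} [MeasurableSpace α] {μ : Measure α} {c : α → ℝ}
    (hc : AEStronglyMeasurable c μ) {G : ℝ → ℝ} (hG : ContDiff ℝ ∞ G)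
    (hb : ∀ n, ∃ K, ∀ t, |iteratedDeriv n G t| ≤ K) {φ : α → ℝ}
    (hφ : ∀ n : ℕ, Integrable (fun a => c a ^ n * φ a) μ) :
    ContDiff ℝ ∞ (fun t => ∫ a, φ a * G (c a * t) ∂μ) := by
  rw [contDiff_infty]
  intro n
  have key : ∀ (G : ℝ → ℝ) (φ : α → ℝ), ContDiff ℝ ∞ G →
      (∀ n, ∃ K, ∀ t, |iteratedDeriv n G t| ≤ K) →
      (∀ n : ℕ, Integrable (fun a => c a ^ n * φ a) μ) →
      ∀ t, HasDerivAt (fun t => ∫ a, φ a * G (c a * t) ∂μ)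
        (∫ a, (c a * φ a) * deriv G (c a * t) ∂μ) t := by
    intro G φ hG hb hφ t
    obtain ⟨K₀, hK₀⟩ := hb 0
    obtain ⟨K₁, hK₁⟩ := hb 1
    simp only [iteratedDeriv_zero] at hK₀
    simp only [iteratedDeriv_one] at hK₁
    have h0 : Integrable φ μ := by simpa using hφ 0
    have h1 : Integrable (fun a => c a * φ a) μ := by simpa using hφ 1
    have hm : ∀ (H : ℝ → ℝ) (t : ℝ), Continuous H →
        AEStronglyMeasurable (fun a => H (c a * t)) μ := fun H t hH =>
      hH.comp_aestronglyMeasurable (hc.mul_const t)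
    have hG' : Continuous (deriv G) := hG.continuous_deriv (by simp)
    refine (hasDerivAt_integral_of_dominated_loc_of_deriv_le
      (F := fun t a => φ a * G (c a * t)) (F' := fun t a => (c a * φ a) * deriv G (c a * t))
      (bound := fun a => ‖c a * φ a‖ * K₁) (s := Set.univ) (x₀ := t) univ_mem ?_ ?_ ?_ ?_ ?_ ?_).2
    · exact Eventually.of_forall fun t => h0.aestronglyMeasurable.mul (hm G t hG.continuous)
    · exact h0.mul_bdd (c := K₀) (hm G t hG.continuous) (Eventually.of_forall fun a => hK₀ _)
    · exact h1.aestronglyMeasurable.mul (hm _ t hG')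
    · refine Eventually.of_forall fun a x _ => ?_
      rw [norm_mul]
      exact mul_le_mul_of_nonneg_left (hK₁ _) (norm_nonneg _)
    · exact h1.norm.mul_const _
    · refine Eventually.of_forall fun a x _ => ?_
      have h2 : HasDerivAt G (deriv G (c a * x)) (c a * x) :=
        (hG.differentiable (by simp) _).hasDerivAt
      have h3 := (h2.comp x ((hasDerivAt_id x).const_mul (c a))).const_mul (φ a)
      exact h3.congr_deriv (by ring)
  induction n generalizing G φ with
  | zero =>
    exact contDiff_zero.2 (continuous_iff_continuousAt.2 fun t => (key G φ hG hb hφ t).continuousAt)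
  | succ n ih =>
    push_cast
    rw [contDiff_succ_iff_deriv]
    refine ⟨fun t => (key G φ hG hb hφ t).differentiableAt, by simp, ?_⟩
    rw [show deriv (fun t => ∫ a, φ a * G (c a * t) ∂μ) = _ from
      funext fun t => (key G φ hG hb hφ t).deriv]
    refine ih (contDiff_infty_iff_deriv.1 hG).2 (fun n => ?_) (fun n => ?_)
    · simpa only [iteratedDeriv_succ'] using hb (n + 1)
    · refine (hφ (n + 1)).congr (Eventually.of_forall fun a => ?_)
      simp only; ring

theorem exists_contDiff_forall_hasSum (e : ℕ → ℕ) (he : ∀ n, n ≤ e n)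
    (he' : StrictMono e) :
    ∃ C : ℝ → ℝ, ContDiff ℝ ∞ C ∧
      ∀ t, HasSum (fun n : ℕ => (-1) ^ n / ((e n).factorial : ℝ) * t ^ n) (C t) := by
  set c : ℕ → ℝ := fun n => (-1) ^ n / ((e n).factorial : ℝ) with hc
  have hr : (FormalMultilinearSeries.ofScalars ℝ c).radius = ⊤ := by
    apply FormalMultilinearSeries.ofScalars_radius_eq_top_of_tendsto
    · refine Eventually.of_forall fun n => ?_
      positivity
    · refine squeeze_zero (fun n => by positivity) (fun n => ?_)
        (tendsto_one_div_add_atTop_nhds_zero_nat (𝕜 := ℝ))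
      simp only [hc, norm_div, norm_pow, norm_neg, norm_one, one_pow, Nat.succ_eq_add_one]
      rw [div_div_div_cancel_left' _ _ one_ne_zero, RCLike.norm_natCast,
        RCLike.norm_natCast, div_le_div_iff₀ (by positivity) (by positivity), one_mul, mul_comm]
      have h1 : (e n + 1).factorial ≤ (e (n + 1)).factorial :=
        Nat.factorial_le (he' (Nat.lt_succ_self n))
      rw [Nat.factorial_succ] at h1
      have h2 := Nat.mul_le_mul_right (e n).factorial (Nat.succ_le_succ (he n))
      exact_mod_cast h2.trans h1
  have hp := FormalMultilinearSeries.hasFPowerSeriesOnBall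
    (FormalMultilinearSeries.ofScalars ℝ c) (by rw [hr]; exact ENNReal.zero_lt_top)
  rw [hr] at hp
  refine ⟨(FormalMultilinearSeries.ofScalars ℝ c).sum, ?_, fun t => ?_⟩
  · refine contDiff_iff_contDiffAt.2 fun t => ?_
    exact (hp.analyticAt_of_mem (y := t) (by simp)).contDiffAt
  · have := hp.hasSum (y := t) (by simp)
    simpa [FormalMultilinearSeries.ofScalars_apply_eq, hc, mul_comm] using this

theorem exists_contDiff_cos_sin_sqrt :
    ∃ C S : ℝ → ℝ, ContDiff ℝ ∞ C ∧ ContDiff ℝ ∞ S ∧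
      (∀ x, C (x ^ 2) = cos x) ∧ ∀ x, x * S (x ^ 2) = sin x := by
  obtain ⟨C, hC, hCs⟩ := exists_contDiff_forall_hasSum (fun n => 2 * n) (fun n => by lia)
    (fun a b h => by dsimp only; lia)
  obtain ⟨S, hS, hSs⟩ := exists_contDiff_forall_hasSum (fun n => 2 * n + 1) (fun n => by lia)
    (fun a b h => by dsimp only; lia)
  refine ⟨C, S, hC, hS, fun x => (hCs (x ^ 2)).unique ?_,
    fun x => ((hSs (x ^ 2)).mul_left x).unique ?_⟩
  · convert Real.hasSum_cos x using 1
    ext n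
    ring
  · convert! Real.hasSum_sin x using 2 with n
    ring

theorem iteratedDeriv_bounded_of_system {C S : ℝ → ℝ} (hC : ContDiff ℝ ∞ C) (hS : ContDiff ℝ ∞ S)
    (hCS : ∀ t, 0 < t → deriv C t = -S t / 2) (hSC : ∀ t, 0 < t → 2 * t * deriv S t + S t = C t)
    {K : ℝ} (hCb : ∀ t, 1 ≤ t → |C t| ≤ K) (hSb : ∀ t, 1 ≤ t → |S t| ≤ K) (n : ℕ) :
    ∃ K, ∀ t, 1 ≤ t → |iteratedDeriv n C t| ≤ K ∧ |iteratedDeriv n S t| ≤ K := by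
  have h1 : ∀ n, ∀ t, 0 < t → iteratedDeriv (n + 1) C t = -iteratedDeriv n S t / 2 := by
    intro n
    induction n with
    | zero => simpa using hCS
    | succ n ih =>
      intro t ht
      refine (hC.hasDerivAt_iteratedDeriv (n + 1) t).unique ?_
      refine ((hS.hasDerivAt_iteratedDeriv n t).neg.div_const 2).congr_of_eventuallyEq ?_
      filter_upwards [lt_mem_nhds ht] with s hs using ih s hs
  have h2 : ∀ n : ℕ, ∀ t, 0 < t → 2 * t * iteratedDeriv (n + 1) S t
      + (2 * n + 1) * iteratedDeriv n S t = iteratedDeriv n C t := by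
    intro n
    induction n with
    | zero => simpa using hSC
    | succ n ih =>
      intro t ht
      refine HasDerivAt.unique ?_ (hC.hasDerivAt_iteratedDeriv n t)
      have h3 := ((((hasDerivAt_id t).const_mul 2).mul (hS.hasDerivAt_iteratedDeriv (n + 1) t)).add
        ((hS.hasDerivAt_iteratedDeriv n t).const_mul (2 * n + 1 : ℝ))).congr_of_eventuallyEq
        (f₁ := iteratedDeriv n C) (by
          filter_upwards [lt_mem_nhds ht] with s hs using (ih s hs).symm)
      refine h3.congr_deriv ?_
      simp only [id]
      push_cast
      ring
  induction n with
  | zero => exact ⟨K, fun t ht => by simpa using ⟨hCb t ht, hSb t ht⟩⟩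
  | succ n ih =>
    obtain ⟨K, hK⟩ := ih
    refine ⟨K + (2 * n + 1) * K, fun t ht => ?_⟩
    have ht0 : 0 < t := by linarith
    obtain ⟨ha, hb⟩ := hK t ht
    have hK0 : 0 ≤ K := (abs_nonneg _).trans ha
    have hnK : 0 ≤ (2 * n + 1) * K := by positivity
    constructor
    · rw [h1 n t ht0, abs_div, abs_neg, abs_two]
      linarith
    · have h4 : 2 * t * iteratedDeriv (n + 1) S t
          = iteratedDeriv n C t - (2 * n + 1) * iteratedDeriv n S t := by
        linarith [h2 n t ht0]
      have h5 : |2 * t * iteratedDeriv (n + 1) S t| ≤ K + (2 * n + 1) * K := by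
        rw [h4]
        refine (abs_sub _ _).trans (add_le_add ha ?_)
        rw [abs_mul, abs_of_nonneg (by positivity : (0 : ℝ) ≤ 2 * n + 1)]
        gcongr
      refine le_trans ?_ h5
      rw [abs_mul, abs_of_pos (by linarith : (0 : ℝ) < 2 * t)]
      exact le_mul_of_one_le_left (abs_nonneg _) (by linarith)

theorem exists_bounded_iteratedDeriv_eq_on_nonneg {C : ℝ → ℝ} (hC : ContDiff ℝ ∞ C)
    (hb : ∀ n, ∃ K, ∀ t, 1 ≤ t → |iteratedDeriv n C t| ≤ K) :
    ∃ D : ℝ → ℝ, ContDiff ℝ ∞ D ∧ (∀ t, 0 ≤ t → D t = C t) ∧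
      ∀ n, ∃ K, ∀ t, |iteratedDeriv n D t| ≤ K := by
  have hD : ContDiff ℝ ∞ fun t => smoothTransition (t + 1) * C t :=
    (smoothTransition.contDiff.comp (contDiff_id.add contDiff_const)).mul hC
  have hpos : ∀ t : ℝ, 0 ≤ t → smoothTransition (t + 1) * C t = C t := fun t ht => by
    rw [smoothTransition.one_of_one_le (by linarith), one_mul]
  refine ⟨_, hD, hpos, fun n => ?_⟩
  obtain ⟨K₁, hK₁⟩ := hb n
  obtain ⟨K₂, hK₂⟩ := (isCompact_Icc (a := (-1 : ℝ)) (b := 1)).exists_bound_of_continuousOn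
    (hD.continuous_iteratedDeriv n (by exact_mod_cast le_top)).continuousOn
  refine ⟨max (max K₁ K₂) 0, fun t => ?_⟩
  rcases lt_or_ge t (-1) with ht | ht
  · have : (fun t : ℝ => smoothTransition (t + 1) * C t) =ᶠ[𝓝 t] fun _ => 0 := by
      filter_upwards [gt_mem_nhds ht] with s hs
      rw [smoothTransition.zero_of_nonpos (by linarith), zero_mul]
    rw [this.iteratedDeriv_eq n]
    simp
  · rcases le_or_gt t 1 with ht' | ht'
    · exact (hK₂ t ⟨ht, ht'⟩).trans ((le_max_right _ _).trans (le_max_left _ _))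
    · have : (fun t : ℝ => smoothTransition (t + 1) * C t) =ᶠ[𝓝 t] C := by
        filter_upwards [lt_mem_nhds ht'] with s hs using hpos s (by linarith)
      rw [this.iteratedDeriv_eq n]
      exact (hK₁ t ht'.le).trans ((le_max_left _ _).trans (le_max_left _ _))

theorem exists_contDiff_bounded_cos_sin_sqrt :
    ∃ C S : ℝ → ℝ, ContDiff ℝ ∞ C ∧ ContDiff ℝ ∞ S ∧
      (∀ n, ∃ K, ∀ t, |iteratedDeriv n C t| ≤ K) ∧ (∀ n, ∃ K, ∀ t, |iteratedDeriv n S t| ≤ K) ∧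
      (∀ x, C (x ^ 2) = cos x) ∧ ∀ x, x * S (x ^ 2) = sin x := by
  obtain ⟨C, S, hC, hS, hCcos, hSsin⟩ := exists_contDiff_cos_sin_sqrt
  have hCt : ∀ t, 0 ≤ t → C t = cos (√t) := fun t ht => by rw [← hCcos, sq_sqrt ht]
  have hSt : ∀ t, 0 ≤ t → √t * S t = sin (√t) := fun t ht => by
    rw [← hSsin, sq_sqrt ht]
  have hCS : ∀ t, 0 < t → deriv C t = -S t / 2 := fun t ht => by
    have hst := sqrt_pos.2 ht
    have h := (((hasDerivAt_sqrt ht.ne').cos).congr_of_eventuallyEq (f₁ := C) (by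
      filter_upwards [lt_mem_nhds ht] with s hs using hCt s hs.le)).deriv
    rw [h, ← hSt t ht.le]
    field_simp
  have hSC : ∀ t, 0 < t → 2 * t * deriv S t + S t = C t := fun t ht => by
    have hst := sqrt_pos.2 ht
    have h := (((hasDerivAt_sqrt ht.ne').mul
      (hS.differentiable (by simp) t).hasDerivAt).unique
      (((hasDerivAt_sqrt ht.ne').sin).congr_of_eventuallyEq (by
      filter_upwards [lt_mem_nhds ht] with s hs using hSt s hs.le)))
    rw [← hCt t ht.le] at h
    field_simp at h
    rw [sq_sqrt ht.le] at h
    linarith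
  have hb := iteratedDeriv_bounded_of_system hC hS hCS hSC (K := 1)
    (fun t ht => by rw [hCt t (by linarith)]; exact abs_cos_le_one _)
    (fun t ht => by
      have h1 : 1 ≤ √t := one_le_sqrt.2 ht
      have h2 : |√t * S t| ≤ 1 := by
        rw [hSt t (by linarith)]; exact abs_sin_le_one _
      rw [abs_mul, abs_of_nonneg (sqrt_nonneg t)] at h2
      exact (le_mul_of_one_le_left (abs_nonneg _) h1).trans h2)
  obtain ⟨C', hC', hCC', hCb⟩ := exists_bounded_iteratedDeriv_eq_on_nonneg hC fun n =>
    (hb n).imp fun K hK t ht => (hK t ht).1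
  obtain ⟨S', hS', hSS', hSb⟩ := exists_bounded_iteratedDeriv_eq_on_nonneg hS fun n =>
    (hb n).imp fun K hK t ht => (hK t ht).2
  exact ⟨C', S', hC', hS', hCb, hSb, fun x => by rw [hCC' _ (sq_nonneg x), hCcos],
    fun x => by rw [hSS' _ (sq_nonneg x), hSsin]⟩

theorem exists_contDiff_eq_sq_add_mul_sq {h : ℝ → ℝ} (hh : ContDiff ℝ ∞ h)
    (hs : HasCompactSupport h) :
    ∃ E O : ℝ → ℝ, ContDiff ℝ ∞ E ∧ ContDiff ℝ ∞ O ∧ ∀ x, h x = E (x ^ 2) + x * O (x ^ 2) := by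
  obtain ⟨C, S, hC, hS, hCb, hSb, hCcos, hSsin⟩ := exists_contDiff_bounded_cos_sin_sqrt
  have hs' : HasCompactSupport fun x => (h x : ℂ) := hs.comp_left (g := Complex.ofReal) (by simp)
  set H : SchwartzMap ℝ ℂ := hs'.toSchwartzMap (Complex.ofRealCLM.contDiff.comp hh) with hH
  set H' : SchwartzMap ℝ ℂ := FourierTransform.fourier H with hH'
  have hinv : ∀ x, h x =
      ∫ ξ, ((H' ξ).re * cos (2 * π * ξ * x) - (H' ξ).im * sin (2 * π * ξ * x)) := by
    intro x
    have h1 : FourierTransformInv.fourierInv H' x = H x := by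
      rw [hH']; simp
    rw [SchwartzMap.fourierInv_coe, Real.fourierInv_eq'] at h1
    have h2 : h x = (H x).re := rfl
    rw [h2, ← h1]
    have h3 : Integrable fun v : ℝ =>
        Complex.exp ((2 * π * inner ℝ v x : ℝ) * Complex.I) • H' v := by
      refine H'.integrable.bdd_smul
        (φ := fun v : ℝ => Complex.exp ((2 * π * inner ℝ v x : ℝ) * Complex.I)) 1
        (Continuous.aestronglyMeasurable (by fun_prop))
        (Eventually.of_forall fun v => ?_)
      rw [Complex.norm_exp_ofReal_mul_I]
    rw [← RCLike.re_eq_complex_re, ← integral_re h3]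
    refine integral_congr_ae (Eventually.of_forall fun v => ?_)
    have h4 : 2 * π * inner ℝ v x = 2 * π * v * x := by simp; ring
    simp only [h4, RCLike.re_eq_complex_re, smul_eq_mul, Complex.mul_re,
      Complex.exp_ofReal_mul_I_re,
      Complex.exp_ofReal_mul_I_im]
    ring
  have hint : ∀ n : ℕ, Integrable (fun ξ : ℝ => ((ξ ^ n : ℝ) : ℂ) * H' ξ) := by
    intro n
    refine (H'.integrable_pow_mul volume n).mono' (by fun_prop) (Eventually.of_forall fun ξ => ?_)
    simp
  have hre : ∀ n : ℕ, Integrable (fun ξ : ℝ => ξ ^ n * (H' ξ).re) := fun n => by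
    simpa only [RCLike.re_eq_complex_re, Complex.re_ofReal_mul] using (hint n).re
  have him : ∀ n : ℕ, Integrable (fun ξ : ℝ => ξ ^ n * (H' ξ).im) := fun n => by
    simpa only [RCLike.im_eq_complex_im, Complex.im_ofReal_mul] using (hint n).im
  have hCi : ∀ n : ℕ, Integrable fun ξ : ℝ => ((2 * π * ξ) ^ 2) ^ n * (H' ξ).re := fun n => by
    refine ((hre (2 * n)).const_mul ((2 * π) ^ (2 * n))).congr (Eventually.of_forall fun ξ => ?_)
    simp only [← pow_mul]
    ring
  have hSi : ∀ n : ℕ, Integrable fun ξ : ℝ =>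
      ((2 * π * ξ) ^ 2) ^ n * (-(2 * π * ξ) * (H' ξ).im) := fun n => by
    refine ((him (2 * n + 1)).const_mul (-(2 * π) ^ (2 * n + 1))).congr
      (Eventually.of_forall fun ξ => ?_)
    simp only [← pow_mul]
    ring
  have hmeas : AEStronglyMeasurable (fun ξ : ℝ => (2 * π * ξ) ^ 2) volume := by fun_prop
  refine ⟨fun t => ∫ ξ, (H' ξ).re * C ((2 * π * ξ) ^ 2 * t),
    fun t => ∫ ξ, (-(2 * π * ξ) * (H' ξ).im) * S ((2 * π * ξ) ^ 2 * t),
    contDiff_integral_comp_mul hmeas hC hCb hCi,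
    contDiff_integral_comp_mul hmeas hS hSb hSi, fun x => ?_⟩
  have hbd : ∀ {G : ℝ → ℝ}, ContDiff ℝ ∞ G → (∀ n, ∃ K, ∀ t, |iteratedDeriv n G t| ≤ K) →
      ∀ {φ : ℝ → ℝ}, Integrable φ → Integrable fun ξ => φ ξ * G ((2 * π * ξ) ^ 2 * x ^ 2) := by
    intro G hG hGb φ hφ
    obtain ⟨K, hK⟩ := hGb 0
    have hGc := hG.continuous
    exact hφ.mul_bdd (c := K) (by fun_prop) (Eventually.of_forall fun ξ => by simpa using hK _)
  rw [hinv x, ← integral_const_mul, ← integral_add (hbd hC hCb (by simpa using hCi 0))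
    ((hbd hS hSb (by simpa using hSi 0)).const_mul x)]
  refine integral_congr_ae (Eventually.of_forall fun ξ => ?_)
  simp only
  rw [← hCcos, ← hSsin, ← mul_pow]
  ring

theorem exists_contDiff_eventually_eq_mul {F : ℝ → ℝ} (hF : ContDiff ℝ ∞ F) (h0 : F 0 = 0) :
    ∃ Q : ℝ → ℝ, ContDiff ℝ ∞ Q ∧ ∀ᶠ t in 𝓝 0, F t = t * Q t := by
  let χ : ContDiffBump (0 : ℝ) := ⟨1, 2, one_pos, one_lt_two⟩
  set P : ℝ → ℝ := fun t => χ t * F t with hP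
  have hPs : ContDiff ℝ ∞ P := χ.contDiff.mul hF
  have hPc : HasCompactSupport P := χ.hasCompactSupport.mul_right
  have hP' : ContDiff ℝ ∞ (deriv P) := (contDiff_infty_iff_deriv.1 hPs).2
  have hb : ∀ n, ∃ K, ∀ t, |iteratedDeriv n (deriv P) t| ≤ K := fun n => by
    rw [← iteratedDeriv_succ']
    refine (hPs.continuous_iteratedDeriv _
      (by exact_mod_cast le_top)).bounded_above_of_compact_support ?_
    rw [iteratedDeriv_eq_iterate]
    generalize n + 1 = m
    induction m with
    | zero => exact hPc
    | succ m ih => rw [Function.iterate_succ_apply']; exact ih.deriv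
  refine ⟨fun t => ∫ s in Set.Ioc (0 : ℝ) 1, 1 * deriv P (s * t),
    contDiff_integral_comp_mul (c := fun s => s) (by fun_prop) hP' hb fun n => ?_, ?_⟩
  · exact (Continuous.integrableOn_Icc (by fun_prop)).mono_set Set.Ioc_subset_Icc_self
  · filter_upwards [χ.eventuallyEq_one] with t ht
    have h1 : F t = P t - P 0 := by simp [hP, h0, ht]
    have h2 : ∫ s in (0 : ℝ)..1, t * deriv P (s * t) = P (1 * t) - P (0 * t) := by
      refine intervalIntegral.integral_eq_sub_of_hasDerivAt (f := fun s => P (s * t))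
        (fun s _ => ?_) (Continuous.intervalIntegrable (by have := hP'.continuous; fun_prop) _ _)
      have h3 := (hPs.differentiable (by simp) (s * t)).hasDerivAt.comp s
        ((hasDerivAt_id s).mul_const t)
      exact h3.congr_deriv (by ring)
    rw [intervalIntegral.integral_const_mul, one_mul, zero_mul,
      intervalIntegral.integral_of_le zero_le_one] at h2
    simp only [h1, ← h2, one_mul]

section CuspidalDecomposition

variable {F G : Type*} [NormedAddCommGroup F] [NormedSpace ℝ F] [NormedAddCommGroup G]
  [NormedSpace ℝ G]

/-- The germ at `0` of the curve `A` factors smoothly through the cusp `s ↦ (s ^ 2, s ^ 3)`, via a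
map that is affine in the second variable. -/
def FactorsThroughCusp (A : ℝ → F) : Prop :=
  ∃ E O : ℝ → F, ContDiff ℝ ∞ E ∧ ContDiff ℝ ∞ O ∧
    ∀ᶠ s in 𝓝 0, A s = E (s ^ 2) + s ^ 3 • O (s ^ 2)

theorem tendsto_sq_nhds_zero : Tendsto (fun s : ℝ => s ^ 2) (𝓝 0) (𝓝 0) :=
  (continuous_pow 2).tendsto' _ _ (by simp)

theorem factorsThroughCusp_of_deriv_eq_zero {A : ℝ → ℝ} (hA : ContDiff ℝ ∞ A)
    (h0 : deriv A 0 = 0) : FactorsThroughCusp A := by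
  let χ : ContDiffBump (0 : ℝ) := ⟨1, 2, one_pos, one_lt_two⟩
  obtain ⟨E, O, hE, hO, hEO⟩ := exists_contDiff_eq_sq_add_mul_sq
    (h := fun t => χ t * A t) (χ.contDiff.mul hA) χ.hasCompactSupport.mul_right
  have hAEO : A =ᶠ[𝓝 0] fun s => E (s ^ 2) + s * O (s ^ 2) := by
    filter_upwards [χ.eventuallyEq_one] with s hs
    rw [← hEO, hs]
    simp
  have hsq : HasDerivAt (fun s : ℝ => s ^ 2) 0 0 := by simpa using hasDerivAt_pow 2 (0 : ℝ)
  have hO0 : O 0 = 0 := by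
    have hE' := HasDerivAt.comp (0 : ℝ) (h₂ := E) (hE.differentiable (by simp) _).hasDerivAt hsq
    have hO' := HasDerivAt.comp (0 : ℝ) (h₂ := O) (hO.differentiable (by simp) _).hasDerivAt hsq
    have h1 := hE'.add ((hasDerivAt_id (0 : ℝ)).mul hO')
    have h2 := (h1.congr_of_eventuallyEq (f₁ := A) hAEO).deriv
    simpa [h0] using h2.symm
  obtain ⟨Q, hQ, hOQ⟩ := exists_contDiff_eventually_eq_mul hO hO0
  refine ⟨E, Q, hE, hQ, ?_⟩
  filter_upwards [hAEO, tendsto_sq_nhds_zero.eventually hOQ] with s hs hs'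
  rw [hs, hs', smul_eq_mul]
  ring

theorem FactorsThroughCusp.prodMk {A : ℝ → F} {B : ℝ → G} (hA : FactorsThroughCusp A)
    (hB : FactorsThroughCusp B) : FactorsThroughCusp fun s => (A s, B s) := by
  obtain ⟨E, O, hE, hO, hEO⟩ := hA
  obtain ⟨E', O', hE', hO', hEO'⟩ := hB
  refine ⟨fun s => (E s, E' s), fun s => (O s, O' s), hE.prodMk hE', hO.prodMk hO', ?_⟩
  filter_upwards [hEO, hEO'] with s hs hs'
  simp [hs, hs']

theorem deriv_fst {A : ℝ → F × G} {s : ℝ} (hA : DifferentiableAt ℝ A s) :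
    deriv (fun s => (A s).1) s = (deriv A s).1 :=
  ((ContinuousLinearMap.fst ℝ F G).hasFDerivAt.comp_hasDerivAt s hA.hasDerivAt).deriv

theorem deriv_snd {A : ℝ → F × G} {s : ℝ} (hA : DifferentiableAt ℝ A s) :
    deriv (fun s => (A s).2) s = (deriv A s).2 :=
  ((ContinuousLinearMap.snd ℝ F G).hasFDerivAt.comp_hasDerivAt s hA.hasDerivAt).deriv

theorem deriv_eq_of_eventually_eq_smul {D K : ℝ → F} (hK : ContDiff ℝ ∞ K)
    (h : ∀ᶠ s in 𝓝 0, D s = s • K s) :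
    deriv D 0 = K 0 ∧ deriv (deriv D) 0 = (2 : ℝ) • deriv K 0 := by
  have hK' : ∀ s, HasDerivAt K (deriv K s) s := fun s =>
    (hK.differentiable (by simp) s).hasDerivAt
  have hK'' : HasDerivAt (deriv K) (deriv (deriv K) 0) 0 :=
    ((contDiff_infty_iff_deriv.1 hK).2.differentiable (by simp) 0).hasDerivAt
  have h1 : deriv D =ᶠ[𝓝 0] fun s => s • deriv K s + K s := by
    refine (EventuallyEq.deriv h).trans (Eventually.of_forall fun s => ?_)
    exact ((hasDerivAt_id s).smul (hK' s)).deriv.trans (by simp)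
  refine ⟨by simpa using h1.self_of_nhds, ?_⟩
  rw [h1.deriv_eq]
  exact (((hasDerivAt_id (0 : ℝ)).smul hK'').add (hK' 0)).deriv.trans (by simp [two_smul])

theorem deriv_of_eventually_eq_cusp {A E O : ℝ → F} (hE : ContDiff ℝ ∞ E) (hO : ContDiff ℝ ∞ O)
    (h : ∀ᶠ s in 𝓝 0, A s = E (s ^ 2) + s ^ 3 • O (s ^ 2)) :
    deriv (deriv A) 0 = (2 : ℝ) • deriv E 0 ∧
      deriv (deriv (deriv A)) 0 = (6 : ℝ) • O 0 := by
  have hE' := (contDiff_infty_iff_deriv.1 hE).2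
  have hO' := (contDiff_infty_iff_deriv.1 hO).2
  have hd : ∀ {H : ℝ → F}, ContDiff ℝ ∞ H → ∀ s,
      HasDerivAt (fun s => H (s ^ 2)) ((2 * s) • deriv H (s ^ 2)) s := fun {H} hH s => by
    have h1 : HasDerivAt (fun s : ℝ => s ^ 2) (2 * s) s := by simpa using hasDerivAt_pow 2 s
    exact HasDerivAt.scomp s (g₁ := H) (hH.differentiable (by simp) _).hasDerivAt h1
  set K : ℝ → F := fun s => (2 : ℝ) • deriv E (s ^ 2) + (3 * s) • O (s ^ 2)
    + (2 * s ^ 3) • deriv O (s ^ 2) with hKdef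
  have hK : ContDiff ℝ ∞ K := by
    have hsq : ContDiff ℝ ∞ fun s : ℝ => s ^ 2 := contDiff_id.pow 2
    have h1 := hE'.comp hsq
    have h2 := hO.comp hsq
    have h3 := hO'.comp hsq
    exact ((contDiff_const.smul h1).add ((contDiff_const.mul contDiff_id).smul h2)).add
      ((contDiff_const.mul (contDiff_id.pow 3)).smul h3)
  have hDK : ∀ᶠ s in 𝓝 0, deriv A s = s • K s := by
    refine (EventuallyEq.deriv h).trans (Eventually.of_forall fun s => ?_)
    refine ((hd hE s).add ((hasDerivAt_pow 3 s).smul (hd hO s))).deriv.trans ?_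
    simp only [hKdef]
    module
  have hK0 : deriv K 0 = (3 : ℝ) • O 0 := by
    have h1 := (((hd hE' 0).const_smul (2 : ℝ)).add
      (((hasDerivAt_id (0 : ℝ)).const_mul 3).smul (hd hO 0))).add
      (((hasDerivAt_pow 3 (0 : ℝ)).const_mul 2).smul (hd hO' 0))
    exact h1.deriv.trans (by simp)
  obtain ⟨h1, h2⟩ := deriv_eq_of_eventually_eq_smul hK hDK
  refine ⟨by simp [h1, hKdef], ?_⟩
  rw [h2, hK0, smul_smul]
  norm_num

end CuspidalDecomposition

theorem exists_isLocalDiffeoAt_leftInverse {E F : Type*} [NormedAddCommGroup E] [NormedSpace ℝ E]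
    [NormedAddCommGroup F] [NormedSpace ℝ F] [CompleteSpace E] {G : E → F}
    (hG : ContDiff ℝ ∞ G) {x₀ : E} (L : E ≃L[ℝ] F) (hL : HasFDerivAt G (L : E →L[ℝ] F) x₀) :
    ∃ Ψ : F → E, IsLocalDiffeoAt Ψ (G x₀) ∧ Ψ (G x₀) = x₀ ∧ ∀ᶠ x in 𝓝 x₀, Ψ (G x) = x := by
  have hn : (∞ : WithTop ℕ∞) ≠ 0 := by simp
  set e := hG.contDiffAt.toOpenPartialHomeomorph G hL hn with he
  have heG : ∀ x, e x = G x := fun x => by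
    rw [he, ContDiffAt.toOpenPartialHomeomorph_coe]
  have hx₀ : x₀ ∈ e.source := hG.contDiffAt.mem_toOpenPartialHomeomorph_source hL hn
  have hS : IsOpen {x | ∃ L' : E ≃L[ℝ] F, (L' : E →L[ℝ] F) = fderiv ℝ G x} :=
    ContinuousLinearEquiv.isOpen.preimage (hG.continuous_fderiv hn)
  set h := e.restrOpen _ hS with hh
  have hhs : h.source = e.source ∩ {x | ∃ L' : E ≃L[ℝ] F, (L' : E →L[ℝ] F) = fderiv ℝ G x} :=
    e.restrOpen_source _ hS
  have hhG : ∀ x, h x = G x := heG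
  have hxh : x₀ ∈ h.source := by
    rw [hhs]
    exact ⟨hx₀, L, hL.fderiv.symm⟩
  have hleft : ∀ x ∈ h.source, h.symm (G x) = x := fun x hx => by
    rw [← hhG]; exact h.left_inv hx
  refine ⟨h.symm, ⟨h.target, h.source, G, h.open_target, ?_, h.open_source, ?_, ?_,
    hG.contDiffOn, fun y hy => h.map_target hy, fun x hx => ?_, fun y hy => ?_, hleft⟩,
    hleft _ hxh, ?_⟩
  · rw [← hhG]; exact h.map_source hxh
  · rwa [hleft _ hxh]
  · intro y hy
    have hys := h.map_target hy
    rw [hhs] at hys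
    obtain ⟨L', hL'⟩ := hys.2
    refine (h.contDiffAt_symm (f₀' := L') hy ?_ ?_).contDiffWithinAt
    · rw [hL', show (h : E → F) = G from funext hhG]
      exact (hG.differentiable hn _).hasFDerivAt
    · rw [show (h : E → F) = G from funext hhG]
      exact hG.contDiffAt
  · rw [← hhG]; exact h.map_source hx
  · rw [← hhG]; exact h.right_inv hy
  · filter_upwards [h.open_source.mem_nhds hxh] with x hx using hleft x hx

theorem exists_continuousLinearEquiv_of_det3_ne_zero {a b c : R3} (h : det3 a b c ≠ 0) :
    ∃ L : R3 ≃L[ℝ] R3, ∀ q : R3, L q = q.1 • a + q.2.1 • b + q.2.2 • c := by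
  let ℓ : R3 →ₗ[ℝ] R3 :=
    { toFun := fun q => q.1 • a + q.2.1 • b + q.2.2 • c
      map_add' := fun x y => by simp only [Prod.fst_add, Prod.snd_add]; module
      map_smul' := fun r x => by
        simp only [Prod.smul_fst, Prod.smul_snd, smul_eq_mul, RingHom.id_apply]; module }
  have hinj : Function.Injective ℓ := by
    refine (injective_iff_map_eq_zero ℓ).2 fun q hq => ?_
    change q.1 • a + q.2.1 • b + q.2.2 • c = 0 at hq
    obtain ⟨x, y, z⟩ := q
    obtain ⟨a1, a2, a3⟩ := a
    obtain ⟨b1, b2, b3⟩ := b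
    obtain ⟨c1, c2, c3⟩ := c
    simp only [Prod.smul_mk, smul_eq_mul, Prod.mk_add_mk, Prod.mk_eq_zero] at hq
    obtain ⟨h1, h2, h3⟩ := hq
    simp only [det3] at h
    have hx : x = 0 := (mul_eq_zero.1 (by
      linear_combination (b2 * c3 - b3 * c2) * h1 - (b1 * c3 - b3 * c1) * h2
        + (b1 * c2 - b2 * c1) * h3 : x * _ = 0)).resolve_right h
    have hy : y = 0 := (mul_eq_zero.1 (by
      linear_combination -(a2 * c3 - a3 * c2) * h1 + (a1 * c3 - a3 * c1) * h2
        - (a1 * c2 - a2 * c1) * h3 : y * _ = 0)).resolve_right h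
    have hz : z = 0 := (mul_eq_zero.1 (by
      linear_combination (a2 * b3 - a3 * b2) * h1 - (a1 * b3 - a3 * b1) * h2
        + (a1 * b2 - a2 * b1) * h3 : z * _ = 0)).resolve_right h
    simp [hx, hy, hz]
  exact ⟨(LinearEquiv.ofInjectiveEndo ℓ hinj).toContinuousLinearEquiv, fun q => rfl⟩

theorem exists_cuspidalEdge_chart_at_zero {A B : ℝ → R3} (hA : ContDiff ℝ ∞ A)
    (hB : ContDiff ℝ ∞ B) (hA0 : deriv A 0 = 0)
    (hdet : det3 (deriv B 0) (deriv (deriv A) 0) (deriv (deriv (deriv A)) 0) ≠ 0) :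
    ∃ Ψ : R3 → R3, IsLocalDiffeoAt Ψ (A 0 + B 0) ∧ Ψ (A 0 + B 0) = 0 ∧
      ∀ᶠ q : R2 in 𝓝 (0, 0), Ψ (A q.2 + B q.1) = fCE q := by
  have hAd : Differentiable ℝ A := hA.differentiable (by simp)
  obtain ⟨E, O, hE, hO, hEO⟩ : FactorsThroughCusp A := by
    have h1 := factorsThroughCusp_of_deriv_eq_zero hA.fst (by rw [deriv_fst (hAd 0), hA0]; rfl)
    have h2 := factorsThroughCusp_of_deriv_eq_zero hA.snd.fst (by
      rw [deriv_fst (hAd.snd 0), deriv_snd (hAd 0), hA0]; rfl)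
    have h3 := factorsThroughCusp_of_deriv_eq_zero hA.snd.snd (by
      rw [deriv_snd (hAd.snd 0), deriv_snd (hAd 0), hA0]; rfl)
    exact h1.prodMk (h2.prodMk h3)
  obtain ⟨hE0, hO0⟩ := deriv_of_eventually_eq_cusp hE hO hEO
  have hdet' : det3 (deriv B 0) (deriv E 0) (O 0) ≠ 0 := by
    intro h
    apply hdet
    rw [hE0, hO0]
    simp only [det3, Prod.smul_fst, Prod.smul_snd, smul_eq_mul] at h ⊢
    linear_combination 12 * h
  obtain ⟨L, hL⟩ := exists_continuousLinearEquiv_of_det3_ne_zero hdet'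
  set G : R3 → R3 := fun q => B q.1 + E q.2.1 + q.2.2 • O q.2.1 with hG
  have hGs : ContDiff ℝ ∞ G := ((hB.comp contDiff_fst).add (hE.comp contDiff_snd.fst)).add
    (contDiff_snd.snd.smul (hO.comp contDiff_snd.fst))
  have hG' : HasFDerivAt G (L : R3 →L[ℝ] R3) 0 := by
    have h1 : HasFDerivAt (fun q : R3 => q.1) (ContinuousLinearMap.fst ℝ ℝ R2) 0 := hasFDerivAt_fst
    have h2 : HasFDerivAt (fun q : R3 => q.2.1) ((ContinuousLinearMap.fst ℝ ℝ ℝ).comp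
      (ContinuousLinearMap.snd ℝ ℝ R2)) 0 := hasFDerivAt_snd.fst
    have h3 : HasFDerivAt (fun q : R3 => q.2.2) ((ContinuousLinearMap.snd ℝ ℝ ℝ).comp
      (ContinuousLinearMap.snd ℝ ℝ R2)) 0 := hasFDerivAt_snd.snd
    have hd : ∀ {H : ℝ → R3}, ContDiff ℝ ∞ H → HasFDerivAt H _ 0 := fun hH =>
      (hH.differentiable (by simp) 0).hasDerivAt.hasFDerivAt
    have h4 := (((hd hB).comp (0 : R3) h1).add ((hd hE).comp (0 : R3) h2)).add
      (h3.smul ((hd hO).comp (0 : R3) h2))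
    refine h4.congr_fderiv (ContinuousLinearMap.ext fun q => ?_)
    simp [hL]
  obtain ⟨Ψ, hΨ, hΨ0, hΨG⟩ := exists_isLocalDiffeoAt_leftInverse hGs L hG'
  have hA00 : A 0 = E 0 := by simpa using hEO.self_of_nhds
  have hG0 : G 0 = A 0 + B 0 := by simp [hG, hA00, add_comm]
  rw [hG0] at hΨ hΨ0
  refine ⟨Ψ, hΨ, hΨ0, ?_⟩
  have hc : Tendsto fCE (𝓝 (0, 0)) (𝓝 0) := by
    refine Continuous.tendsto' ?_ _ _ (by simp [fCE])
    unfold fCE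
    fun_prop
  have hs : Tendsto (fun q : R2 => q.2) (𝓝 (0, 0)) (𝓝 0) := continuous_snd.tendsto _
  filter_upwards [hc.eventually hΨG, hs.eventually hEO] with q h1 h2
  rw [← h1, h2]
  congr 1
  simp only [hG, fCE]
  abel

theorem exists_cuspidalEdge_chart {A B : ℝ → R3} (hA : ContDiff ℝ ∞ A)
    (hB : ContDiff ℝ ∞ B) {a b : ℝ} (hA0 : deriv A a = 0)
    (hdet : det3 (deriv B b) (deriv (deriv A) a) (deriv (deriv (deriv A)) a) ≠ 0) :
    ∃ Ψ : R3 → R3, IsLocalDiffeoAt Ψ (A a + B b) ∧ Ψ (A a + B b) = 0 ∧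
      ∀ᶠ q : R2 in 𝓝 (0, 0), Ψ (A (a + q.2) + B (b + q.1)) = fCE q := by
  have hs : ∀ {H : ℝ → R3} (c : ℝ), deriv (fun s => H (c + s)) = fun s => deriv H (c + s) :=
    fun c => funext fun s => deriv_comp_const_add _ c s
  have := exists_cuspidalEdge_chart_at_zero (A := fun s => A (a + s)) (B := fun s => B (b + s))
    (hA.comp (contDiff_const.add contDiff_id)) (hB.comp (contDiff_const.add contDiff_id))
    (by simp [hs, hA0]) (by simpa [hs] using hdet)
  simpa using this

theorem isLocalDiffeoAt_of_inverse {E F : Type*} [NormedAddCommGroup E] [NormedSpace ℝ E]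
    [NormedAddCommGroup F] [NormedSpace ℝ F] {Φ : E → F} {Φ' : F → E} (hΦ : ContDiff ℝ ∞ Φ)
    (hΦ' : ContDiff ℝ ∞ Φ') (hl : ∀ x, Φ' (Φ x) = x) (hr : ∀ y, Φ (Φ' y) = y) (p : E) :
    IsLocalDiffeoAt Φ p :=
  ⟨Set.univ, Set.univ, Φ', isOpen_univ, Set.mem_univ _, isOpen_univ, Set.mem_univ _,
    hΦ.contDiffOn, hΦ'.contDiffOn, Set.mapsTo_univ _ _, Set.mapsTo_univ _ _,
    fun x _ => hl x, fun y _ => hr y⟩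

/-- A surface of translation generated by a regular curve and a curve with an ordinary cusp is a
cuspidal edge. -/
theorem aEquiv_fCE_of_translation {f : R2 → R3} {A B : ℝ → R3} (hA : ContDiff ℝ ∞ A)
    (hB : ContDiff ℝ ∞ B) {Φ Φ' : R2 → R2} (hΦ : ContDiff ℝ ∞ Φ) (hΦ' : ContDiff ℝ ∞ Φ')
    (hl : ∀ q, Φ' (Φ q) = q) (hr : ∀ q, Φ (Φ' q) = q) {p : R2} (hp : Φ p = 0) {a b : ℝ}
    (hf : ∀ q, f q = A (a + (Φ q).2) + B (b + (Φ q).1)) {w : ℝ → ℝ} {γ : ℝ → R3}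
    (hw : ContDiff ℝ ∞ w) (hγ : ContDiff ℝ ∞ γ) (hAw : deriv A = fun t => w t • γ t)
    (hwa : w a = 0) (hw' : deriv w a ≠ 0) (hdet : det3 (deriv B b) (γ a) (deriv γ a) ≠ 0) :
    AEquiv f p fCE (0, 0) := by
  have hwd : ∀ t, HasDerivAt w (deriv w t) t := fun t =>
    (hw.differentiable (by simp) t).hasDerivAt
  have hγd : ∀ t, HasDerivAt γ (deriv γ t) t := fun t =>
    (hγ.differentiable (by simp) t).hasDerivAt
  have hwd' : HasDerivAt (deriv w) (deriv (deriv w) a) a :=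
    ((contDiff_infty_iff_deriv.1 hw).2.differentiable (by simp) a).hasDerivAt
  have hγd' : HasDerivAt (deriv γ) (deriv (deriv γ) a) a :=
    ((contDiff_infty_iff_deriv.1 hγ).2.differentiable (by simp) a).hasDerivAt
  have h1 : deriv (deriv A) = fun t => w t • deriv γ t + deriv w t • γ t := by
    rw [hAw]
    exact funext fun t => ((hwd t).smul (hγd t)).deriv
  have h2 : deriv (deriv (deriv A)) a = (2 * deriv w a) • deriv γ a + deriv (deriv w) a • γ a := by
    rw [h1]
    refine (((hwd a).smul hγd').add (hwd'.smul (hγd a))).deriv.trans ?_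
    rw [hwa]
    module
  obtain ⟨Ψ, hΨ, hΨ0, hΨf⟩ := exists_cuspidalEdge_chart hA hB (a := a) (b := b)
    (by simp [hAw, hwa]) (by
      rw [h2, h1]
      beta_reduce
      rw [hwa]
      have h3 : 2 * deriv w a ^ 2 * det3 (deriv B b) (γ a) (deriv γ a) ≠ 0 := by positivity
      intro h4
      apply h3
      rw [← h4]
      simp only [det3, Prod.smul_fst, Prod.smul_snd, smul_eq_mul, Prod.fst_add, Prod.snd_add,
        zero_smul, zero_add]
      ring)
  have hfp : f p = A a + B b := by simp [hf p, hp]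
  refine ⟨Φ, Ψ, isLocalDiffeoAt_of_inverse hΦ hΦ' hl hr p, hp, hfp ▸ hΨ, ?_, ?_⟩
  · rw [hfp, hΨ0]
    simp only [fCE, ne_eq, OfNat.ofNat_ne_zero, not_false_eq_true, zero_pow]
    rfl
  · have h5 : Tendsto Φ (𝓝 p) (𝓝 (0, 0)) := by
      have := hΦ.continuous.tendsto p
      rwa [hp] at this
    filter_upwards [h5.eventually hΨf] with q hq
    rw [hf q, hq]

/-- The unit normal as a function of the values `(g1, g2)`. -/
def normalOfGauss (z : R2) : R3 :=
  (Real.sqrt ((1 - z.1 * z.2) ^ 2 + 2 * (z.1 + z.2) ^ 2))⁻¹ •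
    (z.1 + z.2, -z.1 + z.2, 1 + z.1 * z.2)

theorem normalOfGauss_denom_pos (x y : ℝ) : 0 < (1 - x * y) ^ 2 + 2 * (x + y) ^ 2 := by
  nlinarith [sq_nonneg (1 + x * y), sq_nonneg (x + y), sq_nonneg x, sq_nonneg y]

theorem differentiable_normalOfGauss : Differentiable ℝ normalOfGauss := by
  intro z
  have h := normalOfGauss_denom_pos z.1 z.2
  have h1 : DifferentiableAt ℝ
      (fun z : R2 => (1 - z.1 * z.2) ^ 2 + 2 * (z.1 + z.2) ^ 2) z := by fun_prop
  have h2 : DifferentiableAt ℝ (fun z : R2 => (z.1 + z.2, -z.1 + z.2, 1 + z.1 * z.2)) z := by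
    fun_prop
  exact ((h1.sqrt h.ne').inv (sqrt_pos.2 h).ne').smul h2

/-- The light-like direction of `f_u` at a point with `g1 = x`. -/
def lightlikeU (x : ℝ) : R3 := ((-1 - x ^ 2) / 2, (1 - x ^ 2) / 2, x)

/-- The light-like direction of `f_v` at a point with `g2 = y`. -/
def lightlikeV (y : ℝ) : R3 := ((1 + y ^ 2) / 2, (1 - y ^ 2) / 2, -y)

theorem contDiff_lightlikeU : ContDiff ℝ ∞ lightlikeU := by unfold lightlikeU; fun_prop

theorem contDiff_lightlikeV : ContDiff ℝ ∞ lightlikeV := by unfold lightlikeV; fun_prop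

theorem hasDerivAt_lightlikeU (x : ℝ) : HasDerivAt lightlikeU (-x, -x, 1) x := by
  have h := hasDerivAt_pow 2 x
  refine (((h.const_sub (-1)).div_const 2).prodMk
    (((h.const_sub 1).div_const 2).prodMk (hasDerivAt_id x))).congr_deriv ?_
  ext <;> simp <;> ring

theorem hasDerivAt_lightlikeV (y : ℝ) : HasDerivAt lightlikeV (y, -y, -1) y := by
  have h := hasDerivAt_pow 2 y
  refine (((h.const_add 1).div_const 2).prodMk
    (((h.const_sub 1).div_const 2).prodMk (hasDerivAt_id y).neg)).congr_deriv ?_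
  ext
  · simp
  · simp; ring
  · simp

theorem det3_lightlike_normalOfGauss (x y : ℝ) :
    det3 (lightlikeU x) (lightlikeV y) (normalOfGauss (x, y)) =
      -(1 - x * y) * √((1 - x * y) ^ 2 + 2 * (x + y) ^ 2) / 2 := by
  have h := normalOfGauss_denom_pos x y
  have hr := sqrt_pos.2 h
  have hsq := sq_sqrt h.le
  simp only [det3, lightlikeU, lightlikeV, normalOfGauss, Prod.smul_fst, Prod.smul_snd,
    smul_eq_mul]
  field_simp
  rw [hsq]
  ring

theorem IsGTMS.pu_eq {f : R2 → R3} {g1 g2 w1 w2 : ℝ → ℝ} (hf : IsGTMS f g1 g2 w1 w2) (q : R2) :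
    pu f q = w1 q.1 • lightlikeU (g1 q.1) := by
  rw [hf.deriv_u]
  simp only [lightlikeU, Prod.smul_mk, smul_eq_mul]
  ext <;> simp only <;> ring

theorem IsGTMS.pv_eq {f : R2 → R3} {g1 g2 w1 w2 : ℝ → ℝ} (hf : IsGTMS f g1 g2 w1 w2) (q : R2) :
    pv f q = w2 q.2 • lightlikeV (g2 q.2) := by
  rw [hf.deriv_v]
  simp only [lightlikeV, Prod.smul_mk, smul_eq_mul]
  ext <;> simp only <;> ring

theorem hasDerivAt_pu {f : R2 → R3} (hf : Differentiable ℝ f) (u v : ℝ) :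
    HasDerivAt (fun u => f (u, v)) (pu f (u, v)) u :=
  (hf (u, v)).hasFDerivAt.comp_hasDerivAt u ((hasDerivAt_id u).prodMk (hasDerivAt_const u v))

theorem hasDerivAt_pv {f : R2 → R3} (hf : Differentiable ℝ f) (u v : ℝ) :
    HasDerivAt (fun v => f (u, v)) (pv f (u, v)) v :=
  (hf (u, v)).hasFDerivAt.comp_hasDerivAt v ((hasDerivAt_const v u).prodMk (hasDerivAt_id v))

theorem IsGTMS.eq_add_s7 {f : R2 → R3} {g1 g2 w1 w2 : ℝ → ℝ} (hf : IsGTMS f g1 g2 w1 w2)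
    (a b u v : ℝ) : f (u, v) = f (u, b) + (f (a, v) - f (a, b)) := by
  have hd := hf.smooth_f.differentiable (by simp)
  have h : ∀ s, HasDerivAt (fun s => f (s, v) - f (s, b)) 0 s := fun s =>
    ((hasDerivAt_pu hd s v).sub (hasDerivAt_pu hd s b)).congr_deriv (by simp [hf.pu_eq])
  have h1 := is_const_of_deriv_eq_zero (fun s => (h s).differentiableAt) (fun s => (h s).deriv) u a
  rw [← h1]
  abel

theorem _root_.Differentiable.det3 {E : Type*} [NormedAddCommGroup E] [NormedSpace ℝ E]
    {a b c : E → R3} (ha : Differentiable ℝ a) (hb : Differentiable ℝ b)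
    (hc : Differentiable ℝ c) : Differentiable ℝ fun q => det3 (a q) (b q) (c q) := by
  unfold _root_.det3
  fun_prop

/-- The area density divided by `ω1 ω2`. -/
def reducedAreaDensity (z : R2) : ℝ := det3 (lightlikeU z.1) (lightlikeV z.2) (normalOfGauss z)

theorem differentiable_reducedAreaDensity : Differentiable ℝ reducedAreaDensity := by
  have hU : Differentiable ℝ fun z : R2 => lightlikeU z.1 :=
    (contDiff_lightlikeU.differentiable (by simp)).comp differentiable_fst
  have hV : Differentiable ℝ fun z : R2 => lightlikeV z.2 :=
    (contDiff_lightlikeV.differentiable (by simp)).comp differentiable_snd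
  exact hU.det3 hV differentiable_normalOfGauss

theorem one_sub_mul_ne_zero_of_reducedAreaDensity {x y : ℝ}
    (h : reducedAreaDensity (x, y) ≠ 0) : 1 - x * y ≠ 0 := by
  intro h0
  apply h
  simp [reducedAreaDensity, det3_lightlike_normalOfGauss, h0]

theorem IsGTMS.areaDensity_eq {f : R2 → R3} {g1 g2 w1 w2 : ℝ → ℝ} (hf : IsGTMS f g1 g2 w1 w2) :
    areaDensity f g1 g2 = fun q => w1 q.1 * w2 q.2 * reducedAreaDensity (g1 q.1, g2 q.2) := by
  funext q
  change det3 (pu f q) (pv f q) (normalOfGauss (g1 q.1, g2 q.2)) = _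
  rw [hf.pu_eq, hf.pv_eq, reducedAreaDensity]
  simp only [det3, Prod.smul_fst, Prod.smul_snd, smul_eq_mul]
  ring

theorem fderiv_mul_ne_zero_of_left_eq_zero {E : Type*} [NormedAddCommGroup E] [NormedSpace ℝ E]
    {w R : E → ℝ} {p : E} (hw : DifferentiableAt ℝ w p) (hR : DifferentiableAt ℝ R p)
    (hwp : w p = 0) (h : fderiv ℝ (fun q => w q * R q) p ≠ 0) :
    fderiv ℝ w p ≠ 0 ∧ R p ≠ 0 := by
  rw [fderiv_fun_mul hw hR, hwp, zero_smul, zero_add, smul_ne_zero_iff] at h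
  exact h.symm

theorem IsFrontAt.fderiv_gauss_ne_zero {f : R2 → R3} {g1 g2 : ℝ → ℝ} {p : R2}
    (hf : DifferentiableAt ℝ f p) (hg1 : Differentiable ℝ g1) (hg2 : Differentiable ℝ g2)
    (h : IsFrontAt f g1 g2 p) {e : R2} (he : e ≠ 0) (hfe : fderiv ℝ f p e = 0) :
    (e.1 * deriv g1 p.1, e.2 * deriv g2 p.2) ≠ (0 : R2) := by
  intro h0
  apply he
  refine (injective_iff_map_eq_zero _).1 h e ?_
  have hg : HasFDerivAt (fun q : R2 => (g1 q.1, g2 q.2)) _ p :=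
    ((hg1 p.1).hasDerivAt.hasFDerivAt.comp p hasFDerivAt_fst).prodMk
      ((hg2 p.2).hasDerivAt.hasFDerivAt.comp p hasFDerivAt_snd)
  have hn := (differentiable_normalOfGauss (g1 p.1, g2 p.2)).hasFDerivAt.comp p hg
  have hL : HasFDerivAt (fun q => (f q, gtmsNormal g1 g2 q)) _ p := hf.hasFDerivAt.prodMk hn
  rw [hL.fderiv]
  obtain ⟨h1, h2⟩ := Prod.mk_eq_zero.1 h0
  have hz : ((0 : ℝ), (0 : ℝ)) = 0 := rfl
  simp [hfe, h1, h2, hz]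

theorem deriv_comp_lightlikeU {g : ℝ → ℝ} {t : ℝ} (hg : DifferentiableAt ℝ g t) :
    deriv (fun t => lightlikeU (g t)) t = deriv g t • (-g t, -g t, 1) :=
  (HasDerivAt.scomp t (hasDerivAt_lightlikeU (g t)) hg.hasDerivAt).deriv

theorem deriv_comp_lightlikeV {g : ℝ → ℝ} {t : ℝ} (hg : DifferentiableAt ℝ g t) :
    deriv (fun t => lightlikeV (g t)) t = deriv g t • (g t, -g t, -1) :=
  (HasDerivAt.scomp t (hasDerivAt_lightlikeV (g t)) hg.hasDerivAt).deriv

/-- a non-degenerate rank-one ω-singular point at which the surface is a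
front is a cuspidal edge. -/
theorem cuspidal_edge_at_omega_singular_front
    (f : R2 → R3) (g1 g2 w1 w2 : ℝ → ℝ) (hf : IsGTMS f g1 g2 w1 w2)
    (p : R2) (hω : w1 p.1 * w2 p.2 = 0) (hrank : RankOne f p)
    (hnondeg : fderiv ℝ (areaDensity f g1 g2) p ≠ 0)
    (hfront : IsFrontAt f g1 g2 p) :
    AEquiv f p fCE (0, 0) := by
  obtain ⟨a, b⟩ := p
  have hfd := hf.smooth_f.differentiable (by simp)
  have hg1 := hf.smooth_g1.differentiable (by simp)
  have hg2 := hf.smooth_g2.differentiable (by simp)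
  have hw1 := hf.smooth_w1.differentiable (by simp)
  have hw2 := hf.smooth_w2.differentiable (by simp)
  have hR := differentiable_reducedAreaDensity
  have hU : ContDiff ℝ ∞ fun u => f (u, b) :=
    hf.smooth_f.comp (contDiff_id.prodMk contDiff_const)
  have hV : ContDiff ℝ ∞ fun v => f (a, v) - f (a, b) :=
    (hf.smooth_f.comp (contDiff_const.prodMk contDiff_id)).sub contDiff_const
  have hU' : deriv (fun u => f (u, b)) = fun u => w1 u • lightlikeU (g1 u) :=
    funext fun u => by rw [(hasDerivAt_pu hfd u b).deriv, hf.pu_eq]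
  have hV' : deriv (fun v => f (a, v) - f (a, b)) = fun v => w2 v • lightlikeV (g2 v) :=
    funext fun v => by rw [((hasDerivAt_pv hfd a v).sub_const _).deriv, hf.pv_eq]
  rw [hf.areaDensity_eq] at hnondeg
  rcases mul_eq_zero.1 hω with h0 | h0
  · simp only [mul_assoc] at hnondeg
    obtain ⟨hw', hRp⟩ := fderiv_mul_ne_zero_of_left_eq_zero (w := fun q : R2 => w1 q.1)
      (by fun_prop) (by fun_prop) h0 hnondeg
    obtain ⟨hw2b, hM⟩ := mul_ne_zero_iff.1 hRp
    have hgg := one_sub_mul_ne_zero_of_reducedAreaDensity hM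
    have hg' : deriv g1 a ≠ 0 := fun h => IsFrontAt.fderiv_gauss_ne_zero (hfd _) hg1 hg2 hfront
      (e := (1, 0)) (by simp)
      ((hf.pu_eq (a, b)).trans (by simp only at h0; simp [h0])) (by simp [h])
    refine aEquiv_fCE_of_translation hU hV (Φ := fun q => (q.2 - b, q.1 - a))
      (Φ' := fun q => (q.2 + a, q.1 + b)) (by fun_prop) (by fun_prop) (by simp) (by simp)
      (by simp) (a := a) (b := b) (fun q => ?_) hf.smooth_w1
      (contDiff_lightlikeU.comp hf.smooth_g1) hU' h0 (fun h => hw' ?_) ?_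
    · simpa using hf.eq_add_s7 a b q.1 q.2
    · have := (hw1 a).hasDerivAt.hasFDerivAt.comp (a, b) (hasFDerivAt_fst (𝕜 := ℝ))
      refine this.fderiv.trans ?_
      simp [h]
    · rw [hV', show lightlikeU ∘ g1 = fun t => lightlikeU (g1 t) from rfl,
        deriv_comp_lightlikeU (hg1 a)]
      have h1 : w2 b * deriv g1 a * (1 - g1 a * g2 b) ^ 2 ≠ 0 := by positivity
      intro h2
      apply h1
      simp only [det3, lightlikeU, lightlikeV, Prod.smul_fst, Prod.smul_snd, smul_eq_mul] at h2
      linear_combination 2 * h2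
  · simp only [mul_comm (w1 _) (w2 _), mul_assoc] at hnondeg
    obtain ⟨hw', hRp⟩ := fderiv_mul_ne_zero_of_left_eq_zero (w := fun q : R2 => w2 q.2)
      (by fun_prop) (by fun_prop) h0 hnondeg
    obtain ⟨hw1a, hM⟩ := mul_ne_zero_iff.1 hRp
    have hgg := one_sub_mul_ne_zero_of_reducedAreaDensity hM
    have hg' : deriv g2 b ≠ 0 := fun h => IsFrontAt.fderiv_gauss_ne_zero (hfd _) hg1 hg2 hfront
      (e := (0, 1)) (by simp)
      ((hf.pv_eq (a, b)).trans (by simp only at h0; simp [h0])) (by simp [h])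
    refine aEquiv_fCE_of_translation hV hU (Φ := fun q => (q.1 - a, q.2 - b))
      (Φ' := fun q => (q.1 + a, q.2 + b)) (by fun_prop) (by fun_prop) (by simp) (by simp)
      (by simp) (a := b) (b := a) (fun q => ?_) hf.smooth_w2
      (contDiff_lightlikeV.comp hf.smooth_g2) hV' h0 (fun h => hw' ?_) ?_
    · simpa [add_comm] using hf.eq_add_s7 a b q.1 q.2
    · have := (hw2 b).hasDerivAt.hasFDerivAt.comp (a, b) (hasFDerivAt_snd (𝕜 := ℝ))
      refine this.fderiv.trans ?_
      simp [h]
    · rw [hU', show lightlikeV ∘ g2 = fun t => lightlikeV (g2 t) from rfl,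
        deriv_comp_lightlikeV (hg2 b)]
      have h1 : w1 a * deriv g2 b * (1 - g1 a * g2 b) ^ 2 ≠ 0 := by positivity
      intro h2
      apply h1
      simp only [det3, lightlikeU, lightlikeV, Prod.smul_fst, Prod.smul_snd, smul_eq_mul] at h2
      linear_combination 2 * h2
end
end
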